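/- arXiv:2411.17613 — 4 statements merged into one kernel-verified Lean document; each statement's English description precedes it below -/
import Mathlib

section
/- Let n ≥ 1 and let σ be a permutation of [n] = {1,…,n} with σ(1) = 1. For each d ≥ 1 let λ_d denote the number of cycles of σ of length d (fixed points counting as cycles of length 1), and set μ_d = Σ_{e | d, e < d} e·λ_e. Then the number of labeled trees on [n] (rooted at 1) that are σ-invariant equals λ_1^{λ_1−2} · ∏_{d ≥ 2, λ_d ≠ 0} (d·λ_d + μ_d)^{λ_d−1} · μ_d, where the exponent λ_1−2 is truncated subtraction on natural numbers (the factor equals 1 when λ_1 ≤ 2; note λ_1 ≥ 1 since σ(1)=1). -/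
/-!
Rooting a tree at the fixed point `r` of `σ` identifies it with its parent map `f`, the map fixing
`r` under which no nonempty set avoiding `r` is stable; the tree is `σ`-invariant exactly when `f`
commutes with `σ` (`card_invariant_trees`).

An equivariant `f` is determined by its values `g q` at one representative of each orbit `q` other
than `{r}`; these values are arbitrary points whose period divides the length of `q`, and the
parent-map condition becomes: no nonempty set of orbits is stable under the induced map of orbits
(`card_equivariant`). Lengths never increase along this map, so a stable set would contain
a stable set of orbits of a single length, and the count is a product over the lengths `d`
(`card_escapes_levels`).

For one length `d`, with `k` orbits and `m` admissible values lying outside them, the number of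
admissible maps is `m * (d * k + m) ^ (k - 1)` (`card_escapes`). This follows by induction on `k`:
if `S` is the set of the `j` orbits sent directly outside, there are `m ^ j` choices on `S`, and on
the complement one faces the same problem with `k - j` orbits and `d * j` outside values; the
resulting sum over `j` collapses by the binomial theorem (`forestCount_rec`). For `d ≥ 2` one has
`k = λ_d` and `m = μ_d`, while for `d = 1` the root is excluded: `k = λ_1 - 1` and `m = 1`.
-/

/-- The number of cycles of length `d` of a permutation of `Fin n`
(fixed points count as cycles of length 1). -/
noncomputable def cycleCount {n : ℕ} (σ : Equiv.Perm (Fin n)) (d : ℕ) : ℕ :=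
  (Finset.univ.filter fun i : Fin n => Function.minimalPeriod (⇑σ) i = d).card / d

/-- `μ_d = Σ_{e ∣ d, e < d} e·λ_e`. -/
noncomputable def muOf {n : ℕ} (σ : Equiv.Perm (Fin n)) (d : ℕ) : ℕ :=
  ∑ e ∈ d.properDivisors, e * cycleCount σ e

/-! ### Escaping maps -/

/-- Here `E x k` means that the value `x` belongs to the class `k`. A map `g : K → X` escapes if no
nonempty set `S` of classes is stable under it. For finite `K` this says that iterating the induced
partial map on classes always leads to a value in no class. -/
def Escapes {K X : Type} (E : X → K → Prop) (g : K → X) : Prop :=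
  ∀ S : Set K, S.Nonempty → ∃ s ∈ S, ∀ t ∈ S, ¬ E (g s) t

/-- `m * (d * k + m) ^ (k - 1)`, read as `1` when `k = 0`: the number of escaping maps on `k` classes
of size `d` with `m` values outside the classes. -/
def forestCount (k d m : ℕ) : ℕ := if k = 0 then 1 else m * (d * k + m) ^ (k - 1)

/-- The closed form satisfies the recursion obtained by choosing the `j` classes sent directly
outside. -/
theorem forestCount_rec (k d m : ℕ) :
    ∑ j ∈ Finset.range (k + 2), (k + 1).choose j * (m ^ j * forestCount (k + 1 - j) d (d * j)) =
      forestCount (k + 1) d m := by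
  rw [Finset.sum_range_succ']
  have h0 : (k + 1).choose 0 * (m ^ 0 * forestCount (k + 1 - 0) d (d * 0)) = 0 := by
    simp [forestCount]
  rw [h0, add_zero]
  have h1 : forestCount (k + 1) d m = m * (m + d * (k + 1)) ^ k := by
    simp [forestCount, add_comm]
  rw [h1, add_pow, Finset.mul_sum]
  refine Finset.sum_congr rfl fun j hj => ?_
  have hj' : j ≤ k := Nat.lt_succ_iff.mp (Finset.mem_range.mp hj)
  obtain ⟨i, rfl⟩ := Nat.exists_eq_add_of_le hj'
  have hs : j + i + 1 - (j + 1) = i := by omega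
  have hi : j + i - j = i := by omega
  rw [hs, hi]
  rcases i with _ | i
  · simp [forestCount, pow_succ, mul_comm]
  · have hc := Nat.add_one_mul_choose_eq (j + (i + 1)) j
    have hd : d * (i + 1) + d * (j + 1) = d * (j + (i + 1) + 1) := by ring
    simp only [forestCount, Nat.add_one_ne_zero, if_false, hd, Nat.add_sub_cancel]
    calc _ = ((j + (i + 1) + 1).choose (j + 1) * (j + 1)) *
        (m ^ (j + 1) * (d * (d * (j + (i + 1) + 1)) ^ i)) := by ring
      _ = _ := by rw [← hc, Nat.cast_id]; ring

/-- Escaping maps whose set of classes sent directly outside is `p`: the values on `p` are free, and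
the rest is an escaping map on the complement of `p` with values in the classes, for which
the classes in `p` now count as outside. -/
theorem escapes_fiber_card {K X : Type} [Fintype K] [Fintype X] (E : X → K → Prop)
    (T : X → Prop) (p : K → Prop) :
    Nat.card {g : K → X // ((∀ k, T (g k)) ∧ Escapes E g) ∧ ∀ k, p k ↔ ∀ t, ¬ E (g k) t} =
      Nat.card {x // T x ∧ ∀ t, ¬ E x t} ^ Nat.card {k // p k} *
      Nat.card {h : {k // ¬ p k} → X // (∀ k, T (h k) ∧ ∃ t, E (h k) t) ∧
        Escapes (fun x (k : {k // ¬ p k}) => E x k) h} := by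
  classical
  rw [← Nat.card_fun, ← Nat.card_prod]
  refine Nat.card_congr ⟨fun g => (fun k => ⟨g.1 k.1, g.2.1.1 _, (g.2.2 _).1 k.2⟩,
    ⟨fun k => g.1 k.1, fun k => ⟨g.2.1.1 _, ?_⟩, ?_⟩),
    fun ab => ⟨fun k => if h : p k then (ab.1 ⟨k, h⟩).1 else ab.2.1 ⟨k, h⟩, ⟨?_, ?_⟩, ?_⟩, ?_, ?_⟩
  · by_contra! hcon
    exact k.2 ((g.2.2 _).2 hcon)
  · intro S hS
    obtain ⟨s, ⟨s', hs', rfl⟩, h⟩ := g.2.1.2 (Subtype.val '' S) (hS.image _)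
    exact ⟨s', hs', fun t ht => h _ ⟨t, ht, rfl⟩⟩
  · intro k
    by_cases h : p k
    · simpa [h] using (ab.1 ⟨k, h⟩).2.1
    · simpa [h] using (ab.2.2.1 ⟨k, h⟩).1
  · intro S hS
    by_cases hp : ∃ s ∈ S, p s
    · obtain ⟨s, hs, h⟩ := hp
      refine ⟨s, hs, fun t _ => ?_⟩
      simpa [h] using (ab.1 ⟨s, h⟩).2.2 t
    · push Not at hp
      obtain ⟨s0, hs0⟩ := hS
      obtain ⟨s, hs, h⟩ := ab.2.2.2 (Subtype.val ⁻¹' S) ⟨⟨s0, hp _ hs0⟩, hs0⟩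
      refine ⟨s, hs, fun t ht => ?_⟩
      simpa [s.2] using h ⟨t, hp t ht⟩ ht
  · intro k
    by_cases h : p k
    · simpa [h] using (ab.1 ⟨k, h⟩).2.2
    · simpa [h] using (ab.2.2.1 ⟨k, h⟩).2
  · intro g
    ext k
    by_cases h : p k <;> simp [h]
  · rintro ⟨a, b⟩
    refine Prod.ext ?_ (Subtype.ext ?_)
    · funext k
      simp [k.2]
    · funext k
      simp [k.2]

/-- The number of escaping maps with values in `T`, for `n` disjoint classes that each meet `T` in
`d` points. -/
theorem card_escapes (d : ℕ) (n : ℕ) : ∀ (K X : Type) [Fintype K] [Fintype X] (E : X → K → Prop)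
    (T : X → Prop) (_ : ∀ x s t, E x s → E x t → s = t)
    (_ : ∀ k, Nat.card {x // T x ∧ E x k} = d) (_ : Nat.card K = n),
    Nat.card {g : K → X // (∀ k, T (g k)) ∧ Escapes E g} =
      forestCount n d (Nat.card {x // T x ∧ ∀ t, ¬ E x t}) := by
  classical
  induction n using Nat.strong_induction_on with
  | _ n ih =>
  intro K X _ _ E T hE hd hn
  rcases n with _ | k
  · have : IsEmpty K := by
      rw [← Finite.card_eq_zero_iff]; exact hn
    have : Unique {g : K → X // (∀ k, T (g k)) ∧ Escapes E g} :=
      ⟨⟨⟨isEmptyElim, isEmptyElim, fun S ⟨s, _⟩ => isEmptyElim s⟩⟩,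
        fun g => Subtype.ext (funext isEmptyElim)⟩
    rw [Nat.card_unique]; rfl
  set m := Nat.card {x // T x ∧ ∀ t, ¬ E x t} with hm
  have hfib : Nat.card {g : K → X // (∀ k, T (g k)) ∧ Escapes E g} =
      ∑ S : Finset K, Nat.card {g : K → X // ((∀ k, T (g k)) ∧ Escapes E g) ∧
        ∀ k, k ∈ S ↔ ∀ t, ¬ E (g k) t} := by
    rw [← Nat.card_sigma]
    refine Nat.card_congr ⟨fun g => ⟨Finset.univ.filter fun k => ∀ t, ¬ E (g.1 k) t, g.1, g.2,
      by simp⟩, fun g => ⟨g.2.1, g.2.2.1⟩, fun g => rfl, ?_⟩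
    rintro ⟨S, g, h1, h2⟩
    obtain rfl : (Finset.univ.filter fun k => ∀ t, ¬ E (g k) t) = S := by
      ext k; simp [h2]
    rfl
  rw [hfib, ← forestCount_rec]
  have hterm : ∀ S : Finset K, Nat.card {g : K → X // ((∀ k, T (g k)) ∧ Escapes E g) ∧
        ∀ k, k ∈ S ↔ ∀ t, ¬ E (g k) t} =
        m ^ S.card * forestCount (k + 1 - S.card) d (d * S.card) := by
    intro S
    rcases S.eq_empty_or_nonempty with rfl | hS
    · have : IsEmpty {g : K → X // ((∀ k, T (g k)) ∧ Escapes E g) ∧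
          ∀ k, k ∈ (∅ : Finset K) ↔ ∀ t, ¬ E (g k) t} := by
        refine ⟨fun g => ?_⟩
        have : Nonempty K := by
          rw [← Finite.card_pos_iff]; omega
        obtain ⟨s, -, h⟩ := g.2.1.2 Set.univ Set.univ_nonempty
        simpa using (g.2.2 s).2 fun t => h t trivial
      rw [Nat.card_of_isEmpty]; simp [forestCount]
    have hcS : Nat.card {k // ¬ k ∈ S} = k + 1 - S.card := by
      have := Nat.card_eq_fintype_card (α := K)
      rw [Nat.card_eq_fintype_card, Fintype.card_subtype_compl]
      simp; omega
    rw [escapes_fiber_card E T (fun k => k ∈ S)]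
    have hpos := hS.card_pos
    rw [ih (k + 1 - S.card) (by omega) {k // ¬ k ∈ S} X (fun x k => E x k)
      (fun x => T x ∧ ∃ t, E x t) (fun x s t hs ht => Subtype.ext (hE x _ _ hs ht)) ?_ hcS]
    · congr 2
      · simp
      · -- the new outside consists of the `d`-element classes over `S`
        have : Nat.card (Σ s : S, {x // T x ∧ E x s}) = d * S.card := by
          rw [Nat.card_sigma, Finset.sum_congr rfl fun s _ => hd s.1]; simp [mul_comm]
        rw [← this]
        refine Nat.card_congr (Equiv.symm ⟨fun x => ⟨x.2.1, ⟨x.2.2.1, _, x.2.2.2⟩, fun t ht =>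
          t.2 (hE _ _ _ ht x.2.2.2 ▸ x.1.2)⟩, fun x => ⟨⟨x.2.1.2.choose, ?_⟩, x.1, x.2.1.1,
            x.2.1.2.choose_spec⟩, ?_, ?_⟩)
        · by_contra hcon
          exact x.2.2 ⟨_, hcon⟩ x.2.1.2.choose_spec
        · rintro ⟨⟨s, hs⟩, x, hx, hxs⟩
          have hex : ∃ t, E x t := ⟨s, hxs⟩
          obtain rfl : hex.choose = s := hE _ _ _ hex.choose_spec hxs
          rfl
        · intro x; rfl
    · intro k
      rw [← hd k.1]
      exact Nat.card_congr (Equiv.subtypeEquivRight fun x => by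
        constructor
        · rintro ⟨⟨a, -⟩, b⟩; exact ⟨a, b⟩
        · rintro ⟨a, b⟩; exact ⟨⟨a, _, b⟩, b⟩)
  rw [Finset.sum_congr rfl fun S _ => hterm S, ← Finset.powerset_univ,
    Finset.sum_powerset_apply_card (fun j => m ^ j * forestCount (k + 1 - j) d (d * j))]
  rw [Finset.card_univ, ← Nat.card_eq_fintype_card, hn]
  simp

/-! ### Trees as parent maps -/

/-- `f` is the parent map of a tree rooted at `r`, where the root is its own parent. The condition
`leaves` says that no nonempty set avoiding `r` is stable under `f`, which on a finite type means
that every vertex reaches `r`. -/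
structure IsParentMap {V : Type} (r : V) (f : V → V) : Prop where
  root : f r = r
  leaves : ∀ S : Set V, S.Nonempty → r ∉ S → ∃ s ∈ S, f s ∉ S

/-- The graph joining every `v` to `f v` when they differ. -/
def parentGraph {V : Type} (f : V → V) : SimpleGraph V :=
  SimpleGraph.fromRel fun a b => f a = b

theorem parentGraph_adj {V : Type} (f : V → V) (a b : V) :
    (parentGraph f).Adj a b ↔ a ≠ b ∧ (f a = b ∨ f b = a) := by
  simp [parentGraph]

theorem IsParentMap.ne {V : Type} {r : V} {f : V → V} (hf : IsParentMap r f) {v : V}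
    (hv : v ≠ r) : f v ≠ v := by
  obtain ⟨s, rfl, h⟩ := hf.leaves {v} ⟨v, rfl⟩ (by simpa using hv.symm)
  simpa using h

theorem IsParentMap.isTree {V : Type} [Finite V] {r : V} {f : V → V} (hf : IsParentMap r f) :
    (parentGraph f).IsTree := by
  classical
  have hreach : ∀ v, (parentGraph f).Reachable v r := by
    by_contra! hcon
    obtain ⟨s, hs, h⟩ := hf.leaves {v | ¬ (parentGraph f).Reachable v r} hcon (by simp)
    have hs' : s ≠ r := by rintro rfl; exact hs (SimpleGraph.Reachable.refl _)
    refine hs (SimpleGraph.Reachable.trans (SimpleGraph.Adj.reachable ?_) (not_not.mp h))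
    exact (parentGraph_adj f _ _).2 ⟨(hf.ne hs').symm, Or.inl rfl⟩
  have hconn : (parentGraph f).Connected :=
    { preconnected := fun a b => (hreach a).trans (hreach b).symm
      nonempty := ⟨r⟩ }
  rw [SimpleGraph.isTree_iff_connected_and_card]
  refine ⟨hconn, le_antisymm ?_ hconn.card_vert_le_card_edgeSet_add_one⟩
  -- every edge is `{v, f v}` for some non-root `v`
  have hsurj : Function.Surjective (fun v : {v // v ≠ r} =>
      (⟨s(v.1, f v.1), (parentGraph_adj f _ _).2 ⟨(hf.ne v.2).symm, Or.inl rfl⟩⟩ :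
        (parentGraph f).edgeSet)) := by
    rintro ⟨e, he⟩
    induction e with
    | _ a b =>
      have hab := (parentGraph_adj f _ _).1 he
      rcases hab with ⟨hne, h | h⟩
      · refine ⟨⟨a, ?_⟩, Subtype.ext (by simp [h])⟩
        rintro rfl; exact hne (hf.root.symm.trans h)
      · refine ⟨⟨b, ?_⟩, Subtype.ext (by simp [h, Sym2.eq_swap])⟩
        rintro rfl; exact hne (h.symm.trans hf.root)
  have h1 := Nat.card_le_card_of_surjective _ hsurj
  have := Fintype.ofFinite V
  have h2 : Nat.card {v // v ≠ r} + 1 = Nat.card V := by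
    have : 0 < Fintype.card V := Fintype.card_pos_iff.2 ⟨r⟩
    simp only [Nat.card_eq_fintype_card, ne_eq, Fintype.card_subtype_compl,
      Fintype.card_subtype_eq]
    omega
  exact (Nat.add_le_add_right h1 1).trans h2.le

theorem IsParentMap.ext_graph {V : Type} {r : V} {f g : V → V} (hf : IsParentMap r f)
    (hg : IsParentMap r g) (h : parentGraph f = parentGraph g) : f = g := by
  by_contra hne
  obtain ⟨v, hv⟩ := Function.ne_iff.1 hne
  have hr : ∀ v, f v ≠ g v → v ≠ r := by
    rintro v hv rfl; exact hv (hf.root.trans hg.root.symm)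
  obtain ⟨s, hs, hs'⟩ := hf.leaves {v | f v ≠ g v} ⟨v, hv⟩ fun h => hr r h rfl
  have hsr := hr s hs
  have hadj : (parentGraph g).Adj s (f s) := by
    rw [← h, parentGraph_adj]
    exact ⟨(hf.ne hsr).symm, Or.inl rfl⟩
  rw [parentGraph_adj] at hadj
  have hgf : g (f s) = s := hadj.2.resolve_left fun h => hs h.symm
  -- agreement at `f s` would make `{s, f s}` a 2-cycle of `f`
  have hff : f (f s) = s := (not_not.mp hs').trans hgf
  have hfr : f s ≠ r := by
    intro h; rw [h, hg.root] at hgf; exact hsr hgf.symm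
  obtain ⟨t, rfl | rfl, ht⟩ := hf.leaves {s, f s} ⟨s, by simp⟩ (by simp [hsr.symm, hfr.symm])
  · simp at ht
  · simp [hff] at ht

/-- The parent of `v` is chosen among the neighbours of `v` that are closer to `r`. The edges so
obtained form a tree inside `T`, hence all of `T`. -/
theorem exists_parentMap {V : Type} [Finite V] (r : V) {T : SimpleGraph V} (hT : T.IsTree) :
    ∃ f, IsParentMap r f ∧ parentGraph f = T := by
  classical
  have hstep : ∀ v, v ≠ r → ∃ w, T.Adj v w ∧ T.dist w r < T.dist v r := by
    intro v hv
    obtain ⟨p, hp⟩ := hT.connected.exists_walk_length_eq_dist v r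
    cases p with
    | nil => exact absurd rfl hv
    | cons h q =>
      refine ⟨_, h, ?_⟩
      have := SimpleGraph.dist_le q
      simp at hp; omega
  choose! f hf using hstep
  have hpm : IsParentMap r (fun v => if v = r then r else f v) := by
    refine ⟨by simp, fun S hS hr => ?_⟩
    obtain ⟨s, hs, hmin⟩ := Set.exists_min_image S (fun v => T.dist v r) S.toFinite hS
    have hsr : s ≠ r := by rintro rfl; exact hr hs
    refine ⟨s, hs, fun h => ?_⟩
    rw [if_neg hsr] at h
    exact absurd (hmin _ h) (not_le.2 (hf s hsr).2)
  refine ⟨_, hpm, ?_⟩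
  refine le_antisymm ?_ ((SimpleGraph.isTree_iff_minimal_connected.1 hT).2 hpm.isTree.connected ?_)
  all_goals
    intro a b hab
    rw [parentGraph_adj] at hab
    rcases hab with ⟨hne, h | h⟩
    · have : a ≠ r := by rintro rfl; exact hne (by simpa using h)
      rw [if_neg this] at h
      exact h ▸ (hf a this).1
    · have : b ≠ r := by rintro rfl; exact hne (by simpa using h.symm)
      rw [if_neg this] at h
      exact h ▸ (hf b this).1.symm

theorem card_invariant_trees {V : Type} [Finite V] (r : V) (σ : Equiv.Perm V) (hσ : σ r = r) :
    Nat.card {T : SimpleGraph V // T.IsTree ∧ ∀ i j, T.Adj i j ↔ T.Adj (σ i) (σ j)} =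
      Nat.card {f : V → V // IsParentMap r f ∧ ∀ v, f (σ v) = σ (f v)} := by
  symm
  refine Nat.card_congr (Equiv.ofBijective (fun f => ⟨parentGraph f.1, f.2.1.isTree, ?_⟩) ⟨?_, ?_⟩)
  · intro i j
    simp [parentGraph_adj, f.2.2]
  · intro f g h
    exact Subtype.ext (f.2.1.ext_graph g.2.1 (congrArg Subtype.val h))
  · rintro ⟨T, hT, hinv⟩
    obtain ⟨f, hf, rfl⟩ := exists_parentMap r hT
    have hσ' : σ.symm r = r := by rw [Equiv.symm_apply_eq, hσ]
    -- the conjugate of `f` by `σ` has the same graph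
    have hconj : IsParentMap r (fun v => σ.symm (f (σ v))) := by
      refine ⟨by rw [hσ, hf.root, hσ'], fun S hS hr => ?_⟩
      obtain ⟨s, ⟨s, hs, rfl⟩, h⟩ := hf.leaves (σ '' S) (hS.image _) (by
        rintro ⟨x, hx, h⟩
        rw [← hσ] at h
        exact hr (σ.injective h ▸ hx))
      exact ⟨s, hs, fun h' => h ⟨_, h', by simp⟩⟩
    have heq := hf.ext_graph hconj (by
      ext i j
      rw [hinv, parentGraph_adj, parentGraph_adj]
      simp [Equiv.symm_apply_eq])
    refine ⟨⟨f, hf, fun v => ?_⟩, rfl⟩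
    have := congrFun heq v
    rw [this, Equiv.apply_symm_apply]

/-! ### Orbits and equivariant parent maps -/

open Function in
/-- Powers of `σ` that agree at `x` agree at every point whose period divides that of `x`. -/
theorem zpow_eq_zpow_of_dvd {V : Type} (σ : Equiv.Perm V) {x y : V}
    (h : minimalPeriod σ y ∣ minimalPeriod σ x) {i j : ℤ} (hij : (σ ^ i) x = (σ ^ j) x) :
    (σ ^ i) y = (σ ^ j) y := by
  have key : ∀ z : V, (σ ^ i) z = (σ ^ j) z ↔ (minimalPeriod σ z : ℤ) ∣ i - j := by
    intro z
    have := MulAction.zpow_smul_eq_iff_minimalPeriod_dvd (a := σ) (b := z) (n := i - j)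
    rw [show ((σ • ·) : V → V) = σ from rfl] at this
    rw [← this, sub_eq_neg_add, zpow_add, mul_smul, zpow_neg, inv_smul_eq_iff]
    rfl
  rw [key] at hij ⊢
  exact (Int.natCast_dvd_natCast.2 h).trans hij

/-- The type of cycles of `σ`, fixed points included. -/
abbrev OrbitOf {V : Type} (σ : Equiv.Perm V) : Type :=
  Quotient (Equiv.Perm.SameCycle.setoid σ)

/-- The cycle of `σ` through `v`. -/
abbrev orbitMk {V : Type} (σ : Equiv.Perm V) (v : V) : OrbitOf σ :=
  Quotient.mk (Equiv.Perm.SameCycle.setoid σ) v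

theorem orbitMk_eq {V : Type} (σ : Equiv.Perm V) (v w : V) :
    orbitMk σ v = orbitMk σ w ↔ ∃ i : ℤ, (σ ^ i) v = w := Quotient.eq

theorem orbitMk_zpow {V : Type} (σ : Equiv.Perm V) (i : ℤ) (v : V) :
    orbitMk σ ((σ ^ i) v) = orbitMk σ v := ((orbitMk_eq σ _ _).2 ⟨i, rfl⟩).symm

theorem minimalPeriod_zpow {V : Type} (σ : Equiv.Perm V) (i : ℤ) (v : V) :
    Function.minimalPeriod σ ((σ ^ i) v) = Function.minimalPeriod σ v := by
  have : ∀ (j : ℤ) (w : V),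
      Function.minimalPeriod σ ((σ ^ j) w) ∣ Function.minimalPeriod σ w := by
    intro j w
    refine Function.IsPeriodicPt.minimalPeriod_dvd ?_
    have h := Function.isPeriodicPt_minimalPeriod σ w
    rw [Function.IsPeriodicPt, Function.IsFixedPt] at h ⊢
    rw [← Equiv.Perm.coe_pow] at h ⊢
    rw [← Equiv.Perm.mul_apply, ← zpow_natCast, ← zpow_add, add_comm, zpow_add,
      Equiv.Perm.mul_apply, zpow_natCast, h]
  refine Nat.dvd_antisymm (this i v) ?_
  have h := this (-i) ((σ ^ i) v)
  rwa [← Equiv.Perm.mul_apply, ← zpow_add, neg_add_cancel, zpow_zero, Equiv.Perm.one_apply] at h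

/-- The length of a cycle, defined as the period of a chosen representative. -/
noncomputable def orbitLen {V : Type} {σ : Equiv.Perm V} (q : OrbitOf σ) : ℕ :=
  Function.minimalPeriod σ q.out

theorem exists_zpow_out {V : Type} (σ : Equiv.Perm V) (v : V) :
    ∃ i : ℤ, (σ ^ i) (orbitMk σ v).out = v :=
  (orbitMk_eq σ _ _).1 (Quotient.out_eq _)

theorem orbitLen_mk {V : Type} (σ : Equiv.Perm V) (v : V) :
    orbitLen (orbitMk σ v) = Function.minimalPeriod σ v := by
  obtain ⟨i, hi⟩ := exists_zpow_out σ v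
  conv_rhs => rw [← hi]
  rw [minimalPeriod_zpow]; rfl

theorem comm_zpow {V : Type} (σ : Equiv.Perm V) {f : V → V} (hf : ∀ v, f (σ v) = σ (f v))
    (i : ℤ) (v : V) : f ((σ ^ i) v) = (σ ^ i) (f v) := by
  induction i using Int.induction_on generalizing v with
  | zero => simp
  | succ n ih => rw [zpow_add_one, Equiv.Perm.mul_apply, Equiv.Perm.mul_apply, ih, hf]
  | pred n ih =>
    rw [zpow_sub_one, Equiv.Perm.mul_apply, Equiv.Perm.mul_apply, ih]
    congr 1
    rw [Equiv.Perm.eq_inv_iff_eq, ← hf, ← Equiv.Perm.mul_apply, mul_inv_cancel, Equiv.Perm.one_apply]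

/-- Equivariant parent maps correspond to their values at the chosen representatives of the non-root
orbits. -/
theorem card_equivariant {V : Type} [Finite V] (r : V) (σ : Equiv.Perm V) (hσ : σ r = r) :
    Nat.card {f : V → V // IsParentMap r f ∧ ∀ v, f (σ v) = σ (f v)} =
      Nat.card {g : {q : OrbitOf σ // q ≠ orbitMk σ r} → V //
        (∀ q, Function.minimalPeriod σ (g q) ∣ orbitLen q.1) ∧
        Escapes (fun v q => orbitMk σ v = q.1) g} := by
  classical
  have hσz : ∀ i : ℤ, (σ ^ i) r = r := fun i =>
    Equiv.Perm.zpow_apply_eq_self_of_apply_eq_self hσ i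
  have hr : ∀ v, orbitMk σ v = orbitMk σ r ↔ v = r := by
    intro v
    rw [eq_comm, orbitMk_eq]
    simp [hσz, eq_comm]
  refine Nat.card_congr (Equiv.ofBijective (fun f => ⟨fun q => f.1 q.1.out, ?_, ?_⟩) ⟨?_, ?_⟩)
  · intro q
    refine Function.IsPeriodicPt.minimalPeriod_dvd ?_
    have h := Function.isPeriodicPt_minimalPeriod σ q.1.out
    exact h.map (g := f.1) (fun v => f.2.2 v)
  · intro S hS
    obtain ⟨q0, hq0⟩ := hS
    obtain ⟨s, ⟨q, hq, hs⟩, h⟩ := f.2.1.leaves {v | ∃ q ∈ S, orbitMk σ v = q.1}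
      ⟨q0.1.out, q0, hq0, Quotient.out_eq _⟩ (by
        rintro ⟨q, -, hq⟩
        exact q.2 hq.symm)
    refine ⟨q, hq, fun t ht hts => h ⟨t, ht, ?_⟩⟩
    obtain ⟨i, hi⟩ := exists_zpow_out σ s
    rw [← hi, comm_zpow σ f.2.2, orbitMk_zpow, hs, hts]
  · intro f g h
    refine Subtype.ext (funext fun v => ?_)
    by_cases hv : v = r
    · rw [hv, f.2.1.root, g.2.1.root]
    · obtain ⟨i, hi⟩ := exists_zpow_out σ v
      have := congrFun (congrArg Subtype.val h) ⟨orbitMk σ v, fun h => hv ((hr v).1 h)⟩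
      simp only at this
      rw [← hi, comm_zpow σ f.2.2, comm_zpow σ g.2.2, this]
  · rintro ⟨g, hdvd, hesc⟩
    choose i hi using exists_zpow_out σ
    let f : V → V := fun v => if hv : v = r then r else
      (σ ^ i v) (g ⟨orbitMk σ v, fun h => hv ((hr v).1 h)⟩)
    -- `f` is independent of the chosen exponents, since periods of values divide orbit lengths
    have hf : ∀ (q : {q : OrbitOf σ // q ≠ orbitMk σ r}) (j : ℤ),
        f ((σ ^ j) q.1.out) = (σ ^ j) (g q) := by
      intro q j
      have hq : orbitMk σ ((σ ^ j) q.1.out) = q.1 := by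
        rw [orbitMk_zpow]; exact Quotient.out_eq _
      have hne : (σ ^ j) q.1.out ≠ r := by
        intro h
        rw [h] at hq
        exact q.2 hq.symm
      have hq' : (⟨orbitMk σ ((σ ^ j) q.1.out), fun h => hne ((hr _).1 h)⟩ :
        {q : OrbitOf σ // q ≠ orbitMk σ r}) = q := Subtype.ext hq
      simp only [f, dif_neg hne, hq']
      refine zpow_eq_zpow_of_dvd σ (hdvd q) ?_
      have := hi ((σ ^ j) q.1.out)
      rwa [hq] at this
    have hroot : f r = r := by simp [f]
    have hcomm : ∀ v, f (σ v) = σ (f v) := by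
      intro v
      by_cases hv : v = r
      · rw [hv, hσ, hroot, hσ]
      · have h1 := hf ⟨orbitMk σ v, fun h => hv ((hr v).1 h)⟩ (i v)
        have h2 := hf ⟨orbitMk σ v, fun h => hv ((hr v).1 h)⟩ (1 + i v)
        simp only [zpow_add, zpow_one, Equiv.Perm.mul_apply, hi] at h1 h2
        rw [h2, h1]
    refine ⟨⟨f, ⟨hroot, ?_⟩, hcomm⟩, Subtype.ext (funext fun q => by simpa using hf q 0)⟩
    intro S hS hrS
    by_contra! hcl
    have hSr : ∀ v ∈ S, orbitMk σ v ≠ orbitMk σ r := by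
      intro v hv h
      exact hrS ((hr v).1 h ▸ hv)
    obtain ⟨v0, hv0⟩ := hS
    obtain ⟨q, ⟨v, hv, hvq⟩, h⟩ := hesc {q | ∃ v ∈ S, orbitMk σ v = q.1}
      ⟨⟨_, hSr v0 hv0⟩, v0, hv0, rfl⟩
    refine h ⟨_, hSr _ (hcl v hv)⟩ ⟨f v, hcl v hv, rfl⟩ ?_
    have h1 := hf q (i v)
    rw [← hvq, hi] at h1
    change orbitMk σ (g q) = orbitMk σ (f v)
    rw [h1, orbitMk_zpow]

/-- The value allowed for `q` lies only in classes whose level divides `L q`, so escaping is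
a condition on each level separately. -/
theorem card_escapes_levels {K V : Type} [Finite K] [Finite V] (N : ℕ) (L : K → ℕ)
    (per : V → ℕ) (hL : ∀ q, L q < N) (hL0 : ∀ q, 0 < L q) (E : V → K → Prop)
    (hE : ∀ v q, E v q → per v = L q) :
    Nat.card {g : K → V // (∀ q, per (g q) ∣ L q) ∧ Escapes E g} =
      ∏ d ∈ Finset.range N, Nat.card {h : {q // L q = d} → V // (∀ q, per (h q) ∣ d) ∧
        Escapes (fun v (q : {q // L q = d}) => E v q.1) h} := by
  rw [Finset.prod_range, ← Nat.card_pi]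
  have hval : ∀ (h : (d : Fin N) → {h : {q // L q = d} → V // (∀ q, per (h q) ∣ d) ∧
      Escapes (fun v (q : {q // L q = d}) => E v q.1) h}) (d : ℕ) (hd : d < N) (q : K)
      (hq : L q = d), (h ⟨L q, hL q⟩).1 ⟨q, rfl⟩ = (h ⟨d, hd⟩).1 ⟨q, hq⟩ := by
    intro h d hd q hq
    subst hq
    rfl
  refine Nat.card_congr ⟨fun g d => ⟨fun q => g.1 q.1, ?_, ?_⟩,
    fun h => ⟨fun q => (h ⟨L q, hL q⟩).1 ⟨q, rfl⟩, ?_, ?_⟩, ?_, ?_⟩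
  · rintro ⟨q, hq⟩
    exact (g.2.1 q).trans (dvd_of_eq hq)
  · intro S hS
    obtain ⟨s, ⟨s', hs', rfl⟩, h⟩ := g.2.2 (Subtype.val '' S) (hS.image _)
    exact ⟨s', hs', fun t ht => h _ ⟨t, ht, rfl⟩⟩
  · intro q
    exact (h ⟨L q, hL q⟩).2.1 ⟨q, rfl⟩
  · intro S hS
    -- a class hit from the lowest level of `S` cannot lie in `S` at a higher level
    obtain ⟨q0, hq0, hmin⟩ := Set.exists_min_image S L S.toFinite hS
    obtain ⟨⟨q, hq⟩, hqS, hout⟩ := (h ⟨L q0, hL q0⟩).2.2 (Subtype.val ⁻¹' S) ⟨⟨q0, rfl⟩, hq0⟩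
    have hval := hval h (L q0) (hL q0) q hq
    refine ⟨q, hqS, fun t ht hEt => ?_⟩
    simp only [hval] at hEt
    have h1 := hE _ _ hEt
    have h2 := (h ⟨L q0, hL q0⟩).2.1 ⟨q, hq⟩
    rw [h1] at h2
    have h3 : L t = L q0 := le_antisymm (Nat.le_of_dvd (hL0 q0) h2) (hmin t ht)
    exact hout ⟨t, h3⟩ ht hEt
  · intro g; rfl
  · intro h
    funext d
    exact Subtype.ext (funext fun q => hval h d d.2 q.1 q.2)

/-! ### Counting orbits and assembling the levels -/

theorem orbitLen_pos {V : Type} [Finite V] {σ : Equiv.Perm V} (q : OrbitOf σ) :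
    0 < orbitLen q :=
  Function.minimalPeriod_pos_of_mem_periodicPts
    (σ.injective.mem_periodicPts q.out)

theorem card_orbit {V : Type} [Finite V] {σ : Equiv.Perm V} (q : OrbitOf σ) :
    Nat.card {v // orbitMk σ v = q} = orbitLen q := by
  have hq : orbitMk σ q.out = q := Quotient.out_eq _
  have hpos := orbitLen_pos q
  symm
  rw [← Nat.card_fin (orbitLen q)]
  refine Nat.card_congr (Equiv.ofBijective
    (fun i => ⟨(σ ^ ((i : ℕ) : ℤ)) q.out, by rw [orbitMk_zpow, hq]⟩) ⟨?_, ?_⟩)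
  · intro i j hij
    have h := congrArg Subtype.val hij
    simp only [zpow_natCast, Equiv.Perm.coe_pow] at h
    exact Fin.ext (Function.iterate_injOn_Iio_minimalPeriod i.2 j.2 h)
  · rintro ⟨v, hv⟩
    obtain ⟨i, hi⟩ := exists_zpow_out σ v
    rw [hv] at hi
    have hne : (orbitLen q : ℤ) ≠ 0 := by exact_mod_cast hpos.ne'
    have h0 := Int.emod_nonneg i hne
    have h1 := Int.emod_lt_of_pos i (b := orbitLen q) (by exact_mod_cast hpos)
    refine ⟨⟨(i % orbitLen q).toNat, by omega⟩, Subtype.ext ?_⟩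
    have h2 := MulAction.zpow_smul_mod_minimalPeriod σ q.out i
    simp only [Int.toNat_of_nonneg h0]
    exact h2.trans hi

theorem card_period_eq {V : Type} [Finite V] (σ : Equiv.Perm V) (d : ℕ) :
    Nat.card {v // Function.minimalPeriod σ v = d} =
      d * Nat.card {q : OrbitOf σ // orbitLen q = d} := by
  classical
  have := Fintype.ofFinite V
  have := Fintype.ofFinite (OrbitOf σ)
  have h : Nat.card (Σ q : {q : OrbitOf σ // orbitLen q = d}, {v // orbitMk σ v = q.1}) =
      d * Nat.card {q : OrbitOf σ // orbitLen q = d} := by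
    rw [Nat.card_sigma, Finset.sum_congr rfl fun q _ => (card_orbit q.1).trans q.2]
    simp [mul_comm]
  rw [← h]
  refine Nat.card_congr ⟨fun v => ⟨⟨orbitMk σ v.1, (orbitLen_mk σ v.1).trans v.2⟩, v.1, rfl⟩,
    fun x => ⟨x.2.1, ?_⟩, fun v => rfl, ?_⟩
  · rw [← orbitLen_mk, x.2.2, x.1.2]
  · rintro ⟨⟨q, hq⟩, v, hv⟩
    change orbitMk σ v = q at hv
    subst hv
    rfl

theorem cycleCount_eq {n : ℕ} (σ : Equiv.Perm (Fin n)) {d : ℕ} (hd : 0 < d) :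
    cycleCount σ d = Nat.card {q : OrbitOf σ // orbitLen q = d} := by
  have h := card_period_eq σ d
  rw [Nat.card_eq_fintype_card, Fintype.card_subtype] at h
  rw [cycleCount, h, Nat.mul_div_cancel_left _ hd]

theorem card_proper_period {n : ℕ} (σ : Equiv.Perm (Fin n)) {d : ℕ} (hd : 0 < d) :
    Nat.card {v // Function.minimalPeriod σ v ∣ d ∧ Function.minimalPeriod σ v ≠ d} =
      muOf σ d := by
  rw [Nat.card_eq_fintype_card, Fintype.card_subtype,
    Finset.card_eq_sum_card_fiberwise (f := fun v => Function.minimalPeriod σ v)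
      (t := d.properDivisors), muOf]
  · refine Finset.sum_congr rfl fun e he => ?_
    obtain ⟨h1, h2⟩ := Nat.mem_properDivisors.1 he
    rw [cycleCount_eq σ (Nat.pos_of_dvd_of_pos h1 hd), ← card_period_eq,
      Nat.card_eq_fintype_card, Fintype.card_subtype, Finset.filter_filter]
    congr 1
    ext v
    simp only [Finset.mem_filter, Finset.mem_univ, true_and]
    constructor
    · exact fun h => h.2
    · rintro rfl; exact ⟨⟨h1, h2.ne⟩, rfl⟩
  · intro v hv
    simp only [Finset.coe_filter, Finset.mem_univ, true_and, Set.mem_ofPred_eq] at hv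
    exact Finset.mem_coe.2 (Nat.mem_properDivisors.2
      ⟨hv.1, lt_of_le_of_ne (Nat.le_of_dvd hd hv.1) hv.2⟩)

theorem card_level {V : Type} [Finite V] (r : V) (σ : Equiv.Perm V) (d : ℕ) :
    Nat.card {h : {q : {q : OrbitOf σ // q ≠ orbitMk σ r} // orbitLen q.1 = d} → V //
        (∀ q, Function.minimalPeriod σ (h q) ∣ d) ∧
        Escapes (fun v q => orbitMk σ v = q.1.1) h} =
      forestCount (Nat.card {q : {q : OrbitOf σ // q ≠ orbitMk σ r} // orbitLen q.1 = d}) d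
        (Nat.card {v // Function.minimalPeriod σ v ∣ d ∧
          ∀ q : {q : {q : OrbitOf σ // q ≠ orbitMk σ r} // orbitLen q.1 = d},
            ¬ orbitMk σ v = q.1.1}) := by
  classical
  have := Fintype.ofFinite V
  have := Fintype.ofFinite (OrbitOf σ)
  refine card_escapes d _ {q : {q : OrbitOf σ // q ≠ orbitMk σ r} // orbitLen q.1 = d} V
    (fun v q => orbitMk σ v = q.1.1)
    (fun v => Function.minimalPeriod σ v ∣ d)
    (fun x s t hs ht => ?_) (fun q => ?_) rfl
  · exact Subtype.ext (Subtype.ext (hs.symm.trans ht))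
  refine Eq.trans ?_ ((card_orbit q.1.1).trans q.2)
  refine Nat.card_congr (Equiv.subtypeEquivRight fun v => ⟨fun h => h.2, fun h => ⟨?_, h⟩⟩)
  rw [← orbitLen_mk, h, q.2]

/-- Level `d ≥ 2` contains all cycles of length `d`, and its outside values are the points of
smaller period dividing `d`. -/
theorem card_level_of_two_le {n : ℕ} (r : Fin n) (σ : Equiv.Perm (Fin n)) (hσ : σ r = r) {d : ℕ}
    (hd : 2 ≤ d) :
    Nat.card {h : {q : {q : OrbitOf σ // q ≠ orbitMk σ r} // orbitLen q.1 = d} → Fin n //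
        (∀ q, Function.minimalPeriod σ (h q) ∣ d) ∧
        Escapes (fun v q => orbitMk σ v = q.1.1) h} =
      forestCount (cycleCount σ d) d (muOf σ d) := by
  have hroot : ∀ q : OrbitOf σ, orbitLen q = d → q ≠ orbitMk σ r := by
    rintro q hq rfl
    rw [orbitLen_mk, Function.minimalPeriod_eq_one_iff_isFixedPt.2 hσ] at hq
    omega
  rw [card_level, cycleCount_eq σ (by omega), ← card_proper_period σ (by omega)]
  congr 1
  · exact Nat.card_congr ⟨fun q => ⟨q.1.1, q.2⟩, fun q => ⟨⟨q.1, hroot _ q.2⟩, q.2⟩,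
      fun _ => rfl, fun _ => rfl⟩
  · refine Nat.card_congr (Equiv.subtypeEquivRight fun v => and_congr_right fun _ => ?_)
    rw [← orbitLen_mk]
    constructor
    · exact fun h hv => h ⟨⟨_, hroot _ hv⟩, hv⟩ rfl
    · rintro h ⟨⟨q, hq⟩, hlen⟩ rfl
      exact h hlen

/-- Level `1` contains the fixed points other than the root, and its only outside value is
the root. -/
theorem card_level_one {n : ℕ} (r : Fin n) (σ : Equiv.Perm (Fin n)) (hσ : σ r = r) :
    Nat.card {h : {q : {q : OrbitOf σ // q ≠ orbitMk σ r} // orbitLen q.1 = 1} → Fin n //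
        (∀ q, Function.minimalPeriod σ (h q) ∣ 1) ∧
        Escapes (fun v q => orbitMk σ v = q.1.1) h} =
      cycleCount σ 1 ^ (cycleCount σ 1 - 2) := by
  classical
  have hlen : orbitLen (orbitMk σ r) = 1 := by
    rw [orbitLen_mk, Function.minimalPeriod_eq_one_iff_isFixedPt.2 hσ]
  have hk : Nat.card {q : {q : OrbitOf σ // q ≠ orbitMk σ r} // orbitLen q.1 = 1} + 1 =
      cycleCount σ 1 := by
    rw [cycleCount_eq σ one_pos, ← Finite.card_option]
    refine Nat.card_congr ⟨fun q => q.elim ⟨_, hlen⟩ fun q => ⟨q.1.1, q.2⟩,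
      fun q => if h : q.1 = orbitMk σ r then none else some ⟨⟨q.1, h⟩, q.2⟩, ?_, ?_⟩
    · rintro (_ | ⟨⟨q, hq⟩, hq'⟩)
      · simp
      · simp [hq]
    · rintro ⟨q, hq⟩
      by_cases h : q = orbitMk σ r
      · simp [h]
      · simp [h]
  have hm : Nat.card {v // Function.minimalPeriod σ v ∣ 1 ∧
      ∀ q : {q : {q : OrbitOf σ // q ≠ orbitMk σ r} // orbitLen q.1 = 1},
        ¬ orbitMk σ v = q.1.1} = 1 := by
    refine (Nat.card_congr (Equiv.subtypeEquivRight (q := fun v => orbitMk σ v = orbitMk σ r)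
      fun v => ?_)).trans ((card_orbit (orbitMk σ r)).trans hlen)
    rw [← orbitLen_mk, Nat.dvd_one]
    constructor
    · rintro ⟨h1, h2⟩
      by_contra h
      exact h2 ⟨⟨_, h⟩, h1⟩ rfl
    · intro h
      exact ⟨h ▸ hlen, fun q hq => q.1.2 (hq.symm.trans h)⟩
  rw [card_level, hm, ← hk, forestCount]
  split_ifs with h
  · rw [h]; rfl
  · rw [one_mul, one_mul]; rfl

/-- The number of labeled trees on `[n]` (rooted at the vertex `1`, i.e. `0 : Fin n`)
invariant under a permutation `σ` fixing `1` equals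
`λ_1 ^ (λ_1 − 2) · ∏_{d ≥ 2, λ_d ≠ 0} (d·λ_d + μ_d)^{λ_d − 1} · μ_d`. -/
theorem polya_tree_count (n : ℕ) (hn : 0 < n) (σ : Equiv.Perm (Fin n))
    (hσ : σ ⟨0, hn⟩ = ⟨0, hn⟩) :
    Nat.card {T : SimpleGraph (Fin n) //
        T.IsTree ∧ ∀ i j : Fin n, T.Adj i j ↔ T.Adj (σ i) (σ j)} =
      cycleCount σ 1 ^ (cycleCount σ 1 - 2) *
        ∏ d ∈ (Finset.Icc 2 n).filter (fun d => cycleCount σ d ≠ 0),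
          (d * cycleCount σ d + muOf σ d) ^ (cycleCount σ d - 1) * muOf σ d := by
  have hlen : ∀ q : OrbitOf σ, orbitLen q < n + 1 := by
    intro q
    rw [← card_orbit q]
    exact Nat.lt_succ_of_le ((Finite.card_subtype_le _).trans (by simp))
  rw [card_invariant_trees ⟨0, hn⟩ σ hσ, card_equivariant ⟨0, hn⟩ σ hσ,
    card_escapes_levels (K := {q : OrbitOf σ // q ≠ orbitMk σ ⟨0, hn⟩}) (n + 1)
      (fun q => orbitLen q.1) (fun v => Function.minimalPeriod σ v)
      (fun q => hlen q.1) (fun q => orbitLen_pos q.1) (fun v q => orbitMk σ v = q.1)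
      (fun v q h => by rw [← orbitLen_mk, h])]
  have h0 : Nat.card {h : {q : {q : OrbitOf σ // q ≠ orbitMk σ ⟨0, hn⟩} // orbitLen q.1 = 0} →
      Fin n // (∀ q, Function.minimalPeriod σ (h q) ∣ 0) ∧
        Escapes (fun v q => orbitMk σ v = q.1.1) h} = 1 := by
    have : IsEmpty {q : {q : OrbitOf σ // q ≠ orbitMk σ ⟨0, hn⟩} // orbitLen q.1 = 0} :=
      ⟨fun q => (orbitLen_pos q.1.1).ne' q.2⟩
    rw [card_level, Nat.card_of_isEmpty, forestCount, if_pos rfl]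
  have hrange : Finset.range (n + 1) = insert 0 (insert 1 (Finset.Icc 2 n)) := by
    ext d
    simp only [Finset.mem_range, Finset.mem_insert, Finset.mem_Icc]
    omega
  rw [hrange, Finset.prod_insert (by simp), Finset.prod_insert (by simp), h0, one_mul,
    card_level_one _ σ hσ, Finset.prod_filter]
  congr 1
  refine Finset.prod_congr rfl fun d hd => ?_
  rw [card_level_of_two_le _ σ hσ (Finset.mem_Icc.1 hd).1, forestCount]
  by_cases h : cycleCount σ d = 0
  · simp [h]
  · rw [if_neg h, if_pos h, mul_comm]
end

section
/- For every n ≥ 2, the number of labeled trees on [n] is n^{n−2} (Cayley's formula); equivalently, for every m ≥ 1, the number of pairs (T, r) with T a labeled tree on [m] and r ∈ [m] is m^{m−1}. -/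
/-!
Root a tree at `r` and send every vertex to its neighbour closer to `r`. This identifies trees on
`V` with maps `f : V → V` fixing `r` under which every vertex eventually reaches `r`
(`treeOf_bijective`). It remains to count such maps.

More generally, for disjoint finite sets `A` and `S` of sizes `a` and `k`, consider the parent maps
of rooted forests with root set `S` and non-root set `A`. Classifying them by the set `B ⊆ A` of
vertices whose parent is a root, such a forest is an arbitrary map `B → S` together with a forest
with root set `B` and non-root set `A \ B` (`card_fiber`). By induction on `a` the number `N` of
forests satisfies `(k + a) * N = k * (k + a) ^ a` (`card_forests`): writing `j = |B|`, the
inductive step is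
`∑ j, C(a, j) * k ^ j * j * a ^ (a - j) = a * k * (k + a) ^ (a - 1)`, which is the binomial theorem
after absorbing `j` into the binomial coefficient. Taking `k = 1` and `a = n - 1` gives
`N = n ^ (n - 2)`, and choosing a root multiplies this by `n`.
-/

namespace CayleyFormula

/-- Iterating `f` from the given vertex eventually hits `S`. -/
inductive Reach {V : Type*} (f : V → V) (S : Finset V) : V → Prop
  | base {v : V} : v ∈ S → Reach f S v
  | step {v : V} : Reach f S (f v) → Reach f S v

lemma Reach.mem_of_fixed {V : Type*} {f : V → V} {S : Finset V} {v : V} (h : Reach f S v)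
    (hv : f v = v) : v ∈ S := by
  induction h with
  | base h => exact h
  | step _ ih => rw [hv] at ih; exact ih hv

variable {V : Type*} [Fintype V] [DecidableEq V]

/-! ### Counting rooted forests -/

open Classical in
/-- The parent maps of rooted forests with root set `S` and set of non-roots `A`. A parent map is
encoded as a self-map of the ambient type `V` that is the identity outside `A`; in particular
roots are fixed. -/
noncomputable def forests (A S : Finset V) : Finset (V → V) :=
  Finset.univ.filter fun f => (∀ v, v ∉ A → f v = v) ∧ ∀ v ∈ A, Reach f S v

lemma mem_forests {A S : Finset V} {f : V → V} :
    f ∈ forests A S ↔ (∀ v, v ∉ A → f v = v) ∧ ∀ v ∈ A, Reach f S v := by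
  simp [forests]

/-- Cutting a forest at the set `B` of children of the roots leaves a forest with root set `B`. -/
lemma cut_mem {A S B : Finset V} (hAS : Disjoint A S) {f : V → V} (hf : f ∈ forests A S)
    (hB : A.filter (fun v => f v ∈ S) = B) :
    (fun v => if v ∈ B then v else f v) ∈ forests (A \ B) B := by
  rw [mem_forests] at hf ⊢
  obtain ⟨hfix, hreach⟩ := hf
  have memB : ∀ v, v ∈ B ↔ v ∈ A ∧ f v ∈ S := by intro v; rw [← hB]; simp
  refine ⟨fun v hv => ?_, fun v hv => ?_⟩
  · by_cases h : v ∈ B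
    · simp [h]
    · simp only [h, if_false]
      exact hfix v (by simpa [h] using hv)
  · have hvA : v ∈ A := (Finset.mem_sdiff.1 hv).1
    have hr := hreach v hvA
    clear hv
    induction hr with
    | base h => exact absurd h (Finset.disjoint_left.1 hAS hvA)
    | @step v h ih =>
      by_cases hvB : v ∈ B
      · exact .base hvB
      · refine .step ?_
        simp only [hvB, if_false]
        by_cases hfA : f v ∈ A
        · exact ih hfA
        · exact absurd ((memB v).2 ⟨hvA, h.mem_of_fixed (hfix _ hfA)⟩) hvB

/-- Attaching the roots `B` of a forest to a new root set `S` gives a forest whose vertices with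
parent in `S` are exactly those of `B`. -/
lemma glue_mem {A S B : Finset V} (hAS : Disjoint A S) (hBA : B ⊆ A) {g : V → V}
    (hg : g ∈ forests (A \ B) B) (h : B → S) :
    (fun v => if hv : v ∈ B then (h ⟨v, hv⟩ : V) else g v) ∈
      (forests A S).filter (fun f => A.filter (fun v => f v ∈ S) = B) := by
  rw [Finset.mem_filter, mem_forests]
  obtain ⟨hfix, hreach⟩ := mem_forests.1 hg
  refine ⟨⟨fun v hv => ?_, fun v hv => ?_⟩, ?_⟩
  · have hvB : v ∉ B := fun h => hv (hBA h)
    simp only [hvB, dif_neg, not_false_iff]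
    exact hfix v (by simp [hv])
  · have key : ∀ v, Reach g B v →
        Reach (fun v => if hv : v ∈ B then (h ⟨v, hv⟩ : V) else g v) S v := by
      intro v hr
      induction hr with
      | @base v hb => exact .step (.base (by simp [hb]))
      | @step v _ ih =>
        refine .step ?_
        by_cases hvB : v ∈ B
        · exact .base (by simp [hvB])
        · simpa only [hvB, dif_neg, not_false_iff] using ih
    by_cases hvB : v ∈ B
    · exact key v (.base hvB)
    · exact key v (hreach v (by simp [hv, hvB]))
  · ext v
    simp only [Finset.mem_filter]
    by_cases hvB : v ∈ B
    · simp [hvB, hBA hvB]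
    · simp only [hvB, dif_neg, not_false_iff, iff_false, not_and]
      intro hvA hgS
      have hgA : g v ∉ A := Finset.disjoint_right.1 hAS hgS
      have hfg : g (g v) = g v := hfix _ (by simp [hgA])
      have hr : Reach g B (g v) := by
        cases hreach v (by simp [hvA, hvB]) with
        | base hb => exact absurd hb hvB
        | step hr => exact hr
      exact hgA (hBA (hr.mem_of_fixed hfg))

lemma card_fiber {A S B : Finset V} (hAS : Disjoint A S) (hBA : B ⊆ A) :
    ((forests A S).filter (fun f => A.filter (fun v => f v ∈ S) = B)).card =
      S.card ^ B.card * (forests (A \ B) B).card := by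
  have e : ((Finset.univ : Finset (B → S)) ×ˢ forests (A \ B) B).card =
      S.card ^ B.card * (forests (A \ B) B).card := by
    rw [Finset.card_product]; simp
  rw [← e]
  have memS : ∀ f ∈ (forests A S).filter (fun f => A.filter (fun v => f v ∈ S) = B),
      ∀ v : B, f v ∈ S := by
    intro f hf v
    have h2 := (Finset.mem_filter.1 hf).2
    exact (Finset.mem_filter.1 (h2.ge v.2)).2
  refine Finset.card_bij'
    (fun f hf => (fun v => ⟨f v, memS f hf v⟩, fun v => if v ∈ B then v else f v))
    (fun p _ v => if hv : v ∈ B then (p.1 ⟨v, hv⟩ : V) else p.2 v) ?_ ?_ ?_ ?_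
  · intro f hf
    rw [Finset.mem_filter] at hf
    exact Finset.mem_product.2 ⟨Finset.mem_univ _, cut_mem hAS hf.1 hf.2⟩
  · intro p hp
    exact glue_mem hAS hBA (Finset.mem_product.1 hp).2 p.1
  · intro f hf
    funext v
    by_cases hv : v ∈ B <;> simp [hv]
  · intro p hp
    have hfix := (mem_forests.1 (Finset.mem_product.1 hp).2).1
    refine Prod.ext ?_ ?_
    · funext v; simp
    · funext v
      by_cases hv : v ∈ B
      · simp [hv, hfix v (by simp [hv])]
      · simp [hv]

lemma binomial_identity (b k : ℕ) :
    ∑ j ∈ Finset.range (b + 1 + 1), (b + 1).choose j • (k ^ j * (j * (b + 1) ^ (b + 1 - j))) =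
      (b + 1) * (k * (k + (b + 1)) ^ b) := by
  rw [Finset.sum_range_succ', add_pow k (b + 1) b, Finset.mul_sum, Finset.mul_sum]
  simp only [zero_mul, mul_zero, add_zero, smul_eq_mul]
  refine Finset.sum_congr rfl fun (j : ℕ) _ => ?_
  have h := Nat.add_one_mul_choose_eq b j
  have h2 : b + 1 - (j + 1) = b - j := by omega
  rw [h2, pow_succ]
  calc _ = ((b + 1).choose (j + 1) * (j + 1)) * (k ^ j * k * (b + 1) ^ (b - j)) := by ring
    _ = _ := by rw [← h, Nat.cast_id]; ring

/-- The number of rooted forests, in a form that needs no case distinction for `A = ∅`. -/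
lemma card_forests (a : ℕ) : ∀ A S : Finset V, Disjoint A S → A.card = a →
    (S.card + a) * (forests A S).card = S.card * (S.card + a) ^ a := by
  induction a using Nat.strong_induction_on with
  | _ a ih =>
  intro A S hAS hA
  rcases a with _ | b
  · have hA0 : A = ∅ := Finset.card_eq_zero.1 hA
    have : forests A S = {id} := by
      ext f
      simp [mem_forests, hA0, funext_iff]
    simp [this]
  · have hsum : (forests A S).card =
        ∑ B ∈ A.powerset, S.card ^ B.card * (forests (A \ B) B).card := by
      rw [Finset.card_eq_sum_card_fiberwise (f := fun f => A.filter (fun v => f v ∈ S))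
        (t := A.powerset) (fun f _ => Finset.mem_powerset.2 (Finset.filter_subset _ _))]
      exact Finset.sum_congr rfl fun B hB => card_fiber hAS (Finset.mem_powerset.1 hB)
    have hterm : ∀ B ∈ A.powerset, (b + 1) * (S.card ^ B.card * (forests (A \ B) B).card) =
        S.card ^ B.card * (B.card * (b + 1) ^ (b + 1 - B.card)) := by
      intro B hB
      have hBA := Finset.mem_powerset.1 hB
      have hle : B.card ≤ b + 1 := hA ▸ Finset.card_le_card hBA
      rcases Finset.eq_empty_or_nonempty B with rfl | hne
      · -- Without roots there is no forest on the nonempty set `A`.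
        have hempty : forests (A \ ∅) (∅ : Finset V) = ∅ := by
          rw [Finset.eq_empty_iff_forall_notMem]
          intro f hf
          obtain ⟨v, hv⟩ : A.Nonempty := Finset.card_pos.1 (by omega)
          have hr := (mem_forests.1 hf).2 v (by simpa using hv)
          clear hv
          induction hr with
          | base h => simp at h
          | step _ ih => exact ih
        rw [hempty]; simp
      · have hpos := hne.card_pos
        have := ih (b + 1 - B.card) (by omega) (A \ B) B Finset.sdiff_disjoint
          (by rw [Finset.card_sdiff_of_subset hBA, hA])
        rw [show B.card + (b + 1 - B.card) = b + 1 by omega] at this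
        rw [mul_left_comm, this]
    have hmul : (b + 1) * (forests A S).card = (b + 1) * (S.card * (S.card + (b + 1)) ^ b) := by
      rw [hsum, Finset.mul_sum, Finset.sum_congr rfl hterm,
        Finset.sum_powerset_apply_card
          (fun j => S.card ^ j * (j * (b + 1) ^ (b + 1 - j))), hA, binomial_identity]
    rw [Nat.eq_of_mul_eq_mul_left (by omega) hmul]
    ring

/-! ### Trees and parent maps -/

/-- The undirected graph whose edges join each `v` to `f v`, when these differ. -/
def treeOf {W : Type*} (f : W → W) : SimpleGraph W := SimpleGraph.fromRel fun v w => f v = w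

lemma treeOf_adj {W : Type*} {f : W → W} {v w : W} :
    (treeOf f).Adj v w ↔ v ≠ w ∧ (f v = w ∨ f w = v) := by
  simp [treeOf]

lemma mem_rooted {r : V} {f : V → V} :
    f ∈ forests (Finset.univ.erase r) {r} ↔ f r = r ∧ ∀ v, Reach f {r} v := by
  rw [mem_forests]
  constructor
  · rintro ⟨h1, h2⟩
    refine ⟨h1 r (by simp), fun v => ?_⟩
    by_cases hv : v = r
    · exact .base (by simp [hv])
    · exact h2 v (by simp [hv])
  · rintro ⟨h1, h2⟩
    refine ⟨fun v hv => ?_, fun v _ => h2 v⟩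
    obtain rfl : v = r := by simpa using hv
    exact h1

lemma treeOf_connected {W : Type*} {r : W} {f : W → W} (hr : ∀ v, Reach f {r} v) :
    (treeOf f).Connected := by
  have key : ∀ v, (treeOf f).Reachable v r := by
    intro v
    induction hr v with
    | base h => rw [Finset.mem_singleton.1 h]
    | @step v _ ih =>
      by_cases hv : v = f v
      · rw [hv]; exact ih
      · exact (SimpleGraph.Adj.reachable (treeOf_adj.2 ⟨hv, Or.inl rfl⟩)).trans ih
  have : Nonempty W := ⟨r⟩
  exact ⟨fun v w => (key v).trans (key w).symm⟩

/-- The graph is connected, and has at most `|V| - 1` edges, one for each non-root. -/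
lemma treeOf_isTree {r : V} {f : V → V} (hf : f ∈ forests (Finset.univ.erase r) {r}) :
    (treeOf f).IsTree := by
  obtain ⟨hfr, hr⟩ := mem_rooted.1 hf
  have hc := treeOf_connected hr
  rw [SimpleGraph.isTree_iff_connected_and_card]
  refine ⟨hc, le_antisymm ?_ hc.card_vert_le_card_edgeSet_add_one⟩
  have hsub : (treeOf f).edgeSet ⊆
      (((Finset.univ.erase r).image fun v => s(v, f v) : Finset (Sym2 V)) : Set (Sym2 V)) := by
    intro e he
    induction e using Sym2.ind with
    | _ v w =>
    obtain ⟨hne, h⟩ := treeOf_adj.1 ((treeOf f).mem_edgeSet.1 he)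
    simp only [Finset.coe_image, Set.mem_image, Finset.mem_coe, Finset.mem_erase,
      Finset.mem_univ, and_true]
    rcases h with h | h
    · exact ⟨v, fun hv => hne (by rw [← h, hv, hfr]), by rw [h]⟩
    · exact ⟨w, fun hw => hne (by rw [← h, hw, hfr]), by rw [h, Sym2.eq_swap]⟩
  have h1 : Nat.card (treeOf f).edgeSet ≤ (Finset.univ.erase r).card := by
    rw [Nat.card_coe_set_eq]
    refine (Set.ncard_le_ncard hsub (Finset.finite_toSet _)).trans ?_
    rw [Set.ncard_coe_finset]
    exact Finset.card_image_le
  rw [Finset.card_erase_of_mem (Finset.mem_univ r), Finset.card_univ] at h1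
  have : 0 < Fintype.card V := Fintype.card_pos_iff.2 ⟨r⟩
  rw [Nat.card_eq_fintype_card (α := V)]
  omega

lemma treeOf_injOn {r : V} {f g : V → V} (hf : f ∈ forests (Finset.univ.erase r) {r})
    (hg : g ∈ forests (Finset.univ.erase r) {r}) (h : treeOf f = treeOf g) : f = g := by
  obtain ⟨hfr, hr⟩ := mem_rooted.1 hf
  obtain ⟨hgr, -⟩ := mem_rooted.1 hg
  funext v
  induction hr v with
  | base hv => rw [Finset.mem_singleton.1 hv, hfr, hgr]
  | @step v _ ih =>
    by_cases hv : v = f v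
    · obtain rfl : v = r := Finset.mem_singleton.1 ((hr v).mem_of_fixed hv.symm)
      rw [hfr, hgr]
    · have hadj : (treeOf g).Adj v (f v) := h ▸ treeOf_adj.2 ⟨hv, Or.inl rfl⟩
      rcases (treeOf_adj.1 hadj).2 with h1 | h1
      · exact h1.symm
      · -- Otherwise `v` and `f v` would form a 2-cycle of `f`, never reaching the fixed point `r`.
        exfalso
        rw [h1] at ih
        have cyc : ∀ u, Reach f {r} u → u = v ∨ u = f v → False := by
          intro u hu
          induction hu with
          | base hb =>
            rw [Finset.mem_singleton.1 hb]
            rintro (rfl | hb)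
            · exact hv hfr.symm
            · rw [← hb, hfr] at ih
              exact hv (by rw [← ih, hfr])
          | step _ ih' =>
            rintro (rfl | rfl)
            · exact ih' (Or.inr rfl)
            · exact ih' (Or.inl ih)
        exact cyc v (hr v) (Or.inl rfl)

lemma exists_closer {W : Type*} {T : SimpleGraph W} (hT : T.Connected) {r v : W} (hv : v ≠ r) :
    ∃ w, T.Adj v w ∧ T.dist w r < T.dist v r := by
  obtain ⟨p, hp⟩ := hT.exists_walk_length_eq_dist v r
  cases p with
  | nil => exact absurd rfl hv
  | @cons _ w _ hadj q =>
    refine ⟨w, hadj, ?_⟩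
    have := SimpleGraph.dist_le q
    rw [SimpleGraph.Walk.length_cons] at hp
    omega

lemma treeOf_surj {T : SimpleGraph V} (hT : T.IsTree) (r : V) :
    ∃ f ∈ forests (Finset.univ.erase r) {r}, treeOf f = T := by
  have hex : ∀ v, ∃ w, (v = r → w = r) ∧ (v ≠ r → T.Adj v w ∧ T.dist w r < T.dist v r) := by
    intro v
    by_cases hv : v = r
    · exact ⟨r, fun _ => rfl, fun h => absurd hv h⟩
    · obtain ⟨w, hw⟩ := exists_closer hT.connected hv
      exact ⟨w, fun h => absurd h hv, fun _ => hw⟩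
  choose f hf1 hf2 using hex
  have hr : ∀ d v, T.dist v r = d → Reach f {r} v := by
    intro d
    induction d using Nat.strong_induction_on with
    | _ d ih =>
    intro v hd
    by_cases hv : v = r
    · exact .base (by simp [hv])
    · exact .step (ih _ (hd ▸ (hf2 v hv).2) _ rfl)
  have hr' : ∀ v, Reach f {r} v := fun v => hr _ v rfl
  refine ⟨f, mem_rooted.2 ⟨hf1 r rfl, hr'⟩, ?_⟩
  have hadj : ∀ v w, v ≠ w → f v = w → T.Adj v w := by
    rintro v _ hne rfl
    exact (hf2 v fun hv => hne (by rw [hf1 v hv, hv])).1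
  have hle : treeOf f ≤ T := by
    intro v w h
    obtain ⟨hne, h | h⟩ := treeOf_adj.1 h
    · exact hadj v w hne h
    · exact (hadj w v hne.symm h).symm
  -- A tree is a minimal connected graph.
  exact le_antisymm hle
    ((SimpleGraph.isTree_iff_minimal_connected.1 hT).2 (treeOf_connected hr') hle)

lemma treeOf_bijective (r : V) : Function.Bijective
    (fun f : forests (Finset.univ.erase r) {r} =>
      (⟨treeOf f.1, treeOf_isTree f.2⟩ : {T : SimpleGraph V // T.IsTree})) := by
  constructor
  · intro f g h
    exact Subtype.ext (treeOf_injOn f.2 g.2 (congrArg Subtype.val h))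
  · rintro ⟨T, hT⟩
    obtain ⟨f, hf, h⟩ := treeOf_surj hT r
    exact ⟨⟨f, hf⟩, Subtype.ext h⟩

/-- Cayley's formula multiplied by `n`, which makes it hold for `n = 1` too. -/
lemma mul_card_trees (n : ℕ) (hn : 1 ≤ n) :
    n * Nat.card {T : SimpleGraph (Fin n) // T.IsTree} = n ^ (n - 1) := by
  let r : Fin n := ⟨0, hn⟩
  rw [← Nat.card_eq_of_bijective _ (treeOf_bijective r)]
  have h := card_forests (n - 1) (Finset.univ.erase r) {r} (by simp) (by simp)
  rw [Finset.card_singleton, one_mul, show 1 + (n - 1) = n by omega] at h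
  simpa using h

end CayleyFormula

/-- Cayley's formula: there are `n^{n−2}` labeled trees on `[n]` for `n ≥ 2`;
equivalently, there are `m^{m−1}` pairs `(T, r)` of a labeled tree on `[m]` together
with a root `r ∈ [m]`, for `m ≥ 1`. -/
theorem cayley_formula :
    (∀ n : ℕ, 2 ≤ n →
      Nat.card {T : SimpleGraph (Fin n) // T.IsTree} = n ^ (n - 2)) ∧
    (∀ m : ℕ, 1 ≤ m →
      Nat.card ({T : SimpleGraph (Fin m) // T.IsTree} × Fin m) = m ^ (m - 1)) := by
  refine ⟨fun n hn => ?_, fun m hm => ?_⟩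
  · have h := CayleyFormula.mul_card_trees n (by omega)
    rw [show n - 1 = n - 2 + 1 by omega, pow_succ'] at h
    exact Nat.eq_of_mul_eq_mul_left (by omega) h
  · rw [Nat.card_prod, Nat.card_fin, mul_comm]
    exact CayleyFormula.mul_card_trees m hm
end

section
/- For every n ≥ 2, there exists a bijection P from the set of labeled trees on [n] to the set of sequences of length n−2 with entries in [n] (Prüfer codes) such that for every labeled tree T and every vertex i ∈ [n], the degree of i in T equals 1 plus the number of indices j with P(T)_j = i. -/
/-!
The proof removes one leaf at a time, over an arbitrary finite vertex type `V` with `m + 2`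
elements, by induction on `m`.

Fix `v : V`. Attaching `v` as a leaf at a vertex `u ≠ v` gives a bijection between pairs
`(u, T')`, with `T'` a tree on `V ∖ {v}`, and trees on `V` in which `v` has degree one
(`attachLeaf_injective`, `exists_attachLeaf_eq`). Likewise, prepending `u` gives a bijection between
pairs `(u, c')`, with `c'` a sequence in `V ∖ {v}`, and sequences in `V` that avoid `v`
(`exists_consCode_eq`). Both operations raise the degree, respectively the number of occurrences,
of `u` by one and leave those of the other vertices of `V ∖ {v}` unchanged
(`card_neighborSet_attachLeaf_of_ne`, `codeDegree_consCode_of_ne`).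

By the induction hypothesis, for each degree function `d : V → ℕ` with `d v = 1` for some `v`, the
trees with degrees `d` are in bijection with the sequences whose counts are `d`. If `d` never takes
the value one, there are neither such trees (a tree has a leaf) nor such sequences (a sequence of
length `m + 1` cannot exhaust `m + 3` vertices). The bijections on the fibres of the degree function
glue to a degree-preserving bijection. Which leaf is removed for a given `d` is immaterial; taking
the smallest one would give the classical Prüfer code.
-/

namespace PruferCode

open SimpleGraph

variable {V : Type}

/-- The graph on `V` obtained from a graph on `V ∖ {v}` by joining `v` to the single vertex `u`. -/
def attachLeaf {v : V} (u : ({v}ᶜ : Set V)) (G : SimpleGraph ({v}ᶜ : Set V)) : SimpleGraph V where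
  Adj x y := (∃ (hx : x ∈ ({v}ᶜ : Set V)) (hy : y ∈ ({v}ᶜ : Set V)), G.Adj ⟨x, hx⟩ ⟨y, hy⟩) ∨
    (x = v ∧ y = u) ∨ (x = u ∧ y = v)
  symm := ⟨by
    rintro x y (⟨hx, hy, h⟩ | h | h)
    · exact Or.inl ⟨hy, hx, h.symm⟩
    · exact Or.inr (Or.inr h.symm)
    · exact Or.inr (Or.inl h.symm)⟩
  loopless := ⟨by
    rintro x (⟨hx, hy, h⟩ | ⟨h, h'⟩ | ⟨h, h'⟩)
    · exact h.ne rfl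
    · exact u.2 (h'.symm.trans h)
    · exact u.2 (h.symm.trans h')⟩

/-- The degree a vertex is meant to have in the tree with code `c`. -/
def codeDegree [DecidableEq V] {m : ℕ} (c : Fin m → V) (x : V) : ℕ :=
  1 + (Finset.univ.filter fun j => c j = x).card

/-- The sequence in `V` that starts with `u` and continues with `c`. -/
def consCode {v : V} {m : ℕ} (u : ({v}ᶜ : Set V)) (c : Fin m → ({v}ᶜ : Set V)) :
    Fin (m + 1) → V :=
  Fin.cons (α := fun _ => V) u fun j => (c j : V)

/-! ### Attaching a leaf to a tree -/

section Tree

variable {v : V} (u : ({v}ᶜ : Set V)) (G : SimpleGraph ({v}ᶜ : Set V))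

lemma attachLeaf_adj_leaf (x : V) : (attachLeaf u G).Adj v x ↔ x = u := by
  have := u.2
  simp only [attachLeaf, Set.mem_compl_iff, Set.mem_singleton_iff] at *
  grind

lemma attachLeaf_adj_coe (x y : ({v}ᶜ : Set V)) : (attachLeaf u G).Adj x y ↔ G.Adj x y := by
  have hx := x.2
  have hy := y.2
  simp only [attachLeaf, Set.mem_compl_iff, Set.mem_singleton_iff] at *
  simp [hx, hy]

lemma induce_attachLeaf : (attachLeaf u G).induce {v}ᶜ = G := by
  ext x y
  simp [attachLeaf_adj_coe]

lemma attachLeaf_injective {u u' : ({v}ᶜ : Set V)} {G G' : SimpleGraph ({v}ᶜ : Set V)}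
    (h : attachLeaf u G = attachLeaf u' G') : u = u' ∧ G = G' := by
  refine ⟨Subtype.ext ?_, ?_⟩
  · rw [← attachLeaf_adj_leaf u' G', ← h, attachLeaf_adj_leaf]
  · rw [← induce_attachLeaf u G, h, induce_attachLeaf]

lemma exists_attachLeaf_eq {T : SimpleGraph V} (h : Nat.card (T.neighborSet v) = 1) :
    ∃ u, attachLeaf u (T.induce {v}ᶜ) = T := by
  obtain ⟨u, hu⟩ := Set.ncard_eq_one.1 ((Nat.card_coe_set_eq _).symm.trans h)
  have hadj : ∀ x, T.Adj v x ↔ x = u := fun x => by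
    rw [← mem_neighborSet, hu, Set.mem_singleton_iff]
  have huv : u ∈ ({v}ᶜ : Set V) := fun h => ((hadj u).2 rfl).ne h.symm
  refine ⟨⟨u, huv⟩, ?_⟩
  ext x y
  by_cases hx : x = v
  · subst hx
    rw [attachLeaf_adj_leaf, hadj]
  by_cases hy : y = v
  · subst hy
    rw [adj_comm, attachLeaf_adj_leaf, adj_comm, hadj]
  exact attachLeaf_adj_coe _ _ ⟨x, hx⟩ ⟨y, hy⟩

variable {u G}

/-- A cycle through `v` would enter and leave it along the same edge, so every cycle lives
in `V ∖ {v}`. -/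
lemma attachLeaf_isAcyclic (hG : G.IsAcyclic) : (attachLeaf u G).IsAcyclic := by
  classical
  intro w c hc
  by_cases hv : v ∈ c.support
  · have hc' := hc.rotate hv
    apply hc'.snd_ne_penultimate
    rw [(attachLeaf_adj_leaf u G _).1 (Walk.adj_snd hc'.not_nil),
      (attachLeaf_adj_leaf u G _).1 (Walk.adj_penultimate hc'.not_nil).symm]
  · have hs : ∀ x ∈ c.support, x ∈ ({v}ᶜ : Set V) := fun x hx h => hv (h ▸ hx)
    have hac : ((attachLeaf u G).induce {v}ᶜ).IsAcyclic := (induce_attachLeaf u G).symm ▸ hG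
    refine hac (c.induce _ hs) ?_
    apply Walk.IsCycle.of_map (f := (Embedding.induce _).toHom)
    rwa [Walk.map_induce]

lemma attachLeaf_connected (hG : G.Connected) : (attachLeaf u G).Connected := by
  let f : G →g attachLeaf u G := ⟨fun x => x, fun {x y} h => (attachLeaf_adj_coe u G x y).2 h⟩
  have key : ∀ x, (attachLeaf u G).Reachable u x := fun x => by
    by_cases hx : x = v
    · subst hx
      exact ((attachLeaf_adj_leaf u G _).2 rfl).symm.reachable
    · exact (hG.preconnected u ⟨x, hx⟩).map f
  exact (connected_iff _).2 ⟨fun x y => (key x).symm.trans (key y), ⟨u⟩⟩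

lemma attachLeaf_isTree (hG : G.IsTree) : (attachLeaf u G).IsTree :=
  ⟨attachLeaf_connected hG.connected, attachLeaf_isAcyclic hG.isAcyclic⟩

lemma induce_isTree {T : SimpleGraph V} (hT : T.IsTree) (h : Nat.card (T.neighborSet v) = 1) :
    (T.induce {v}ᶜ).IsTree := by
  have : Finite (T.neighborSet v) := Nat.finite_of_card_ne_zero (by omega)
  have := Fintype.ofFinite (T.neighborSet v)
  refine ⟨hT.connected.induce_compl_singleton_of_degree_eq_one ?_, hT.isAcyclic.induce _⟩
  rw [← card_neighborSet_eq_degree, ← Nat.card_eq_fintype_card, h]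

variable (u G)

lemma card_neighborSet_attachLeaf : Nat.card ((attachLeaf u G).neighborSet v) = 1 := by
  have : (attachLeaf u G).neighborSet v = {(u : V)} := by
    ext x
    simp [attachLeaf_adj_leaf]
  simp [this]

lemma card_neighborSet_attachLeaf_of_ne [Finite V] [DecidableEq V] (x : ({v}ᶜ : Set V)) :
    Nat.card ((attachLeaf u G).neighborSet x) =
      Nat.card (G.neighborSet x) + if u = x then 1 else 0 := by
  have hv : v ∉ ((↑) '' G.neighborSet x : Set V) := by
    rintro ⟨y, -, hy⟩
    exact y.2 hy
  have hadj : (attachLeaf u G).Adj x v ↔ u = x := by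
    rw [adj_comm, attachLeaf_adj_leaf, eq_comm, Subtype.ext_iff]
  have hset : ∀ y, y ≠ v →
      (y ∈ (attachLeaf u G).neighborSet x ↔ y ∈ ((↑) '' G.neighborSet x : Set V)) := by
    intro y hy
    have := attachLeaf_adj_coe u G x ⟨y, hy⟩
    simp_all
  have hcard : ((↑) '' G.neighborSet x : Set V).ncard = (G.neighborSet x).ncard :=
    Set.ncard_image_of_injective _ Subtype.val_injective
  rw [Nat.card_coe_set_eq, Nat.card_coe_set_eq, ← hcard]
  split_ifs with h
  · rw [← Set.ncard_insert_of_notMem hv]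
    congr 1
    ext y
    by_cases hy : y = v
    · subst hy
      simpa using hadj.2 h
    · rw [hset y hy, Set.mem_insert_iff, or_iff_right hy]
  · rw [add_zero]
    congr 1
    ext y
    by_cases hy : y = v
    · subst hy
      exact iff_of_false (fun h' => h (hadj.1 h')) hv
    · exact hset y hy

end Tree

/-! ### Prepending an entry to a code -/

section Code

variable {v : V} {m : ℕ}

lemma consCode_injective {u u' : ({v}ᶜ : Set V)} {c c' : Fin m → ({v}ᶜ : Set V)}
    (h : consCode u c = consCode u' c') : u = u' ∧ c = c' := by
  obtain ⟨h₁, h₂⟩ := Fin.cons_injective2 h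
  exact ⟨Subtype.ext h₁, funext fun j => Subtype.ext (congrFun h₂ j)⟩

variable [DecidableEq V]

lemma codeDegree_eq_one_iff {c : Fin m → V} {x : V} : codeDegree c x = 1 ↔ ∀ j, c j ≠ x := by
  simp [codeDegree, Finset.filter_eq_empty_iff]

lemma exists_consCode_eq {c : Fin (m + 1) → V} (h : codeDegree c v = 1) :
    ∃ u c', consCode (v := v) u c' = c := by
  have hc := codeDegree_eq_one_iff.1 h
  exact ⟨⟨c 0, hc 0⟩, fun j => ⟨c j.succ, hc j.succ⟩, Fin.cons_self_tail c⟩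

lemma codeDegree_consCode (u : ({v}ᶜ : Set V)) (c : Fin m → ({v}ᶜ : Set V)) :
    codeDegree (consCode u c) v = 1 := by
  rw [codeDegree_eq_one_iff]
  refine Fin.cases u.2 fun j => (c j).2

lemma codeDegree_consCode_of_ne (u : ({v}ᶜ : Set V)) (c : Fin m → ({v}ᶜ : Set V))
    (x : ({v}ᶜ : Set V)) :
    codeDegree (consCode u c) (x : V) = codeDegree c x + if u = x then 1 else 0 := by
  unfold codeDegree consCode
  rw [Finset.card_filter, Finset.card_filter, Fin.sum_univ_succ]
  simp only [Fin.cons_zero, Fin.cons_succ, Subtype.ext_iff]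
  ring

end Code

/-! ### The induction -/

/-- Restricting an injection `f` to a fibre of `a` contained in its range. -/
lemma nonempty_fiber_equiv {Z X D : Type} {f : Z → X} (hf : Function.Injective f) (a : X → D)
    (d : D) (hd : ∀ x, a x = d → ∃ z, f z = x) :
    Nonempty ({z // a (f z) = d} ≃ {x // a x = d}) := by
  refine ⟨Equiv.ofBijective (fun z => ⟨f z.1, z.2⟩) ⟨fun z z' h => ?_, fun x => ?_⟩⟩
  · exact Subtype.ext (hf (congrArg Subtype.val h))
  · obtain ⟨z, hz⟩ := hd x.1 x.2
    exact ⟨⟨z, hz ▸ x.2⟩, Subtype.ext hz⟩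

/-- The only tree on two vertices is the single edge. -/
lemma isTree_iff_eq_top_of_card_eq_two [Fintype V] (hV : Fintype.card V = 2)
    (T : SimpleGraph V) : T.IsTree ↔ T = ⊤ := by
  have : Nontrivial V := Fintype.one_lt_card_iff_nontrivial.1 (by omega)
  constructor
  · intro hT
    ext x y
    refine ⟨fun h => h.ne, fun hxy => ?_⟩
    obtain ⟨z, hz⟩ := exists_adj_iff_not_isIsolated.2 (hT.connected.preconnected.not_isIsolated x)
    have : z = y := by
      by_contra hzy
      classical
      have h3 : ({x, y, z} : Finset V).card = 3 :=
        Finset.card_eq_three.2 ⟨x, y, z, hxy, hz.ne, Ne.symm hzy, rfl⟩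
      have := Finset.card_le_univ ({x, y, z} : Finset V)
      omega
    exact this ▸ hz
  · rintro rfl
    refine ⟨connected_top, IsAcyclic.of_card_le_two ?_⟩
    simp [hV]

/-- The inductive step, on one fibre of the degree function. -/
lemma nonempty_fiber_equiv_succ [Fintype V] [DecidableEq V] {m : ℕ}
    (hV : Fintype.card V = m + 3)
    (ih : ∀ v : V, ∃ P : {T : SimpleGraph ({v}ᶜ : Set V) // T.IsTree} ≃ (Fin m → ({v}ᶜ : Set V)),
      ∀ T x, Nat.card (T.1.neighborSet x) = codeDegree (P T) x)
    (d : V → ℕ) :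
    Nonempty ({T : {T : SimpleGraph V // T.IsTree} // (fun x => Nat.card (T.1.neighborSet x)) = d} ≃
      {c : Fin (m + 1) → V // codeDegree c = d}) := by
  by_cases hd : ∃ v, d v = 1
  · obtain ⟨v, hv⟩ := hd
    obtain ⟨P, hP⟩ := ih v
    let f : ({v}ᶜ : Set V) × {T : SimpleGraph ({v}ᶜ : Set V) // T.IsTree} →
        {T : SimpleGraph V // T.IsTree} := fun p => ⟨attachLeaf p.1 p.2.1, attachLeaf_isTree p.2.2⟩
    let g : ({v}ᶜ : Set V) × {T : SimpleGraph ({v}ᶜ : Set V) // T.IsTree} →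
        (Fin (m + 1) → V) := fun p => consCode p.1 (P p.2)
    have hf : Function.Injective f := fun p q h => by
      obtain ⟨h₁, h₂⟩ := attachLeaf_injective (congrArg Subtype.val h)
      exact Prod.ext h₁ (Subtype.ext h₂)
    have hg : Function.Injective g := fun p q h => by
      obtain ⟨h₁, h₂⟩ := consCode_injective h
      exact Prod.ext h₁ (P.injective h₂)
    obtain ⟨ef⟩ := nonempty_fiber_equiv hf (fun T x => Nat.card (T.1.neighborSet x)) d (by
      intro T hT
      have h1 : Nat.card (T.1.neighborSet v) = 1 := (congrFun hT v).trans hv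
      obtain ⟨u, hu⟩ := exists_attachLeaf_eq h1
      exact ⟨(u, ⟨_, induce_isTree T.2 h1⟩), Subtype.ext hu⟩)
    obtain ⟨eg⟩ := nonempty_fiber_equiv hg codeDegree d (by
      intro c hc
      obtain ⟨u, c', h⟩ := exists_consCode_eq ((congrFun hc v).trans hv)
      exact ⟨(u, P.symm c'), by simpa [g] using h⟩)
    have hfg : ∀ p, (fun x => Nat.card ((f p).1.neighborSet x)) = codeDegree (g p) := fun p => by
      funext x
      by_cases hx : x = v
      · subst hx
        exact (card_neighborSet_attachLeaf _ _).trans (codeDegree_consCode _ _).symm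
      · have h₁ := card_neighborSet_attachLeaf_of_ne p.1 p.2.1 ⟨x, hx⟩
        have h₂ := codeDegree_consCode_of_ne p.1 (P p.2) ⟨x, hx⟩
        rw [hP, ← h₂] at h₁
        exact h₁
    exact ⟨ef.symm.trans ((Equiv.subtypeEquivRight fun p => by rw [hfg p]).trans eg)⟩
  · have : Nontrivial V := Fintype.one_lt_card_iff_nontrivial.1 (by omega)
    -- Both fibres are empty.
    have h₁ : IsEmpty {T : {T : SimpleGraph V // T.IsTree} //
        (fun x => Nat.card (T.1.neighborSet x)) = d} := by
      refine ⟨fun ⟨T, hT⟩ => hd ?_⟩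
      classical
      obtain ⟨v, hv⟩ := T.2.exists_vert_degree_one_of_nontrivial
      refine ⟨v, ?_⟩
      rw [← hT, ← hv, ← card_neighborSet_eq_degree, ← Nat.card_eq_fintype_card]
    have h₂ : IsEmpty {c : Fin (m + 1) → V // codeDegree c = d} := by
      refine ⟨fun ⟨c, hc⟩ => hd ?_⟩
      by_contra! hne
      have hsurj : Function.Surjective c := fun v => by
        by_contra! h
        exact hne v (hc ▸ codeDegree_eq_one_iff.2 h)
      have := Fintype.card_le_of_surjective c hsurj
      simp only [Fintype.card_fin] at this
      omega
    exact ⟨Equiv.equivOfIsEmpty _ _⟩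

theorem exists_degree_preserving_equiv (m : ℕ) : ∀ (V : Type) [Fintype V] [DecidableEq V],
    Fintype.card V = m + 2 → ∃ P : {T : SimpleGraph V // T.IsTree} ≃ (Fin m → V),
      ∀ T x, Nat.card (T.1.neighborSet x) = codeDegree (P T) x := by
  induction m with
  | zero =>
    intro V _ _ hV
    have : Unique {T : SimpleGraph V // T.IsTree} :=
      { default := ⟨⊤, (isTree_iff_eq_top_of_card_eq_two hV _).2 rfl⟩
        uniq := fun T => Subtype.ext ((isTree_iff_eq_top_of_card_eq_two hV _).1 T.2) }
    refine ⟨Equiv.ofUnique _ _, fun T x => ?_⟩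
    rw [(isTree_iff_eq_top_of_card_eq_two hV _).1 T.2, Nat.card_eq_fintype_card,
      card_neighborSet_eq_degree, complete_graph_degree]
    simp [codeDegree, hV]
  | succ m ih =>
    intro V _ _ hV
    have e := nonempty_fiber_equiv_succ hV fun v => ih _ (by
      rw [Fintype.card_compl_set, hV]
      simp)
    refine ⟨Equiv.ofFiberEquiv fun d => (e d).some, fun T x => ?_⟩
    exact (congrFun (Equiv.ofFiberEquiv_map (fun d => (e d).some) T) x).symm

end PruferCode

/-- There is a bijection `P` (the Prüfer code) from labeled trees on `[n]` to sequences
of length `n−2` with entries in `[n]`, such that the degree of any vertex `i` in a tree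
`T` equals `1` plus the number of occurrences of `i` in `P T`. -/
theorem prufer_code_exists (n : ℕ) (hn : 2 ≤ n) :
    ∃ P : {T : SimpleGraph (Fin n) // T.IsTree} ≃ (Fin (n - 2) → Fin n),
      ∀ (T : {T : SimpleGraph (Fin n) // T.IsTree}) (i : Fin n),
        Nat.card (T.val.neighborSet i) =
          1 + (Finset.univ.filter fun j : Fin (n - 2) => P T j = i).card :=
  PruferCode.exists_degree_preserving_equiv (n - 2) (Fin n) (by simp; omega)
end

section
/- For every n ≥ 2, the sum over all labeled trees T on [n] of the number of vertices of T of degree 1 equals n·(n−1)^{n−2}. Consequently, the expected number of leaves of a uniformly random labeled tree on [n] is n·(1 − 1/n)^{n−2}. -/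
/-!
The proof counts pairs (tree, leaf): deleting a leaf `v` from a tree on `n` vertices leaves a tree
on the other `n - 1` vertices together with the vertex to which `v` was joined. Hence `v` is a leaf
of exactly `(n - 1) * t (n - 1)` trees, where `t m` is the number of labeled trees on `m` vertices,
and Cayley's formula `t m = m ^ (m - 2)` gives the claim.

Cayley's formula is obtained from the same deletion process, applied to a whole set `S` of leaves.
When `n ≥ 3`, two leaves are never adjacent, so trees in which all of `S` are leaves correspond to
pairs of a map `S → Sᶜ` and a tree on `Sᶜ` (`card_trees_leaves`). As every tree on at least two
vertices has a leaf, inclusion–exclusion over the leaves gives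
`∑ k, (-1) ^ k * (n.choose k) * (n - k) ^ k * t (n - k) = 0` (`treeCount_alternating`). The values
`m ^ (m - 2)` satisfy the same recursion, because the `n`-th finite difference of `x ^ (n - 2)`
vanishes (`alternating_pow`).

That the correspondence preserves trees in both directions rests on the retraction `V → Sᶜ` sending
each leaf to its neighbour: it contracts the pendant edges and fixes all others, so it carries
walks to walks.
-/

/-- The number of leaves (vertices of degree 1) of a graph on `Fin n`. -/
noncomputable def leafCount {n : ℕ} (T : SimpleGraph (Fin n)) : ℕ :=
  Nat.card {v : Fin n // Nat.card (T.neighborSet v) = 1}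

/-! ### Attaching pendant vertices -/

/-- A vertex with exactly one neighbour. -/
def IsLeaf {V : Type*} (T : SimpleGraph V) (v : V) : Prop := ∃! w, T.Adj v w

lemma isLeaf_iff_card {V : Type*} (T : SimpleGraph V) (v : V) :
    Nat.card (T.neighborSet v) = 1 ↔ IsLeaf T v := by
  rw [Nat.card_eq_one_iff_exists]
  constructor
  · rintro ⟨⟨w, hw⟩, h⟩
    exact ⟨w, hw, fun y hy => congrArg Subtype.val (h ⟨y, hy⟩)⟩
  · rintro ⟨w, hw, h⟩
    exact ⟨⟨w, hw⟩, fun y => Subtype.ext (h y y.2)⟩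

/-- The graph on `V` obtained from a graph `T` on the complement of `S` by attaching each `s ∈ S`
as a pendant vertex to `f s`. -/
def attach {V : Type*} (S : Set V) (f : S → (Sᶜ : Set V)) (T : SimpleGraph (Sᶜ : Set V)) :
    SimpleGraph V where
  Adj a b := (∃ (ha : a ∈ Sᶜ) (hb : b ∈ Sᶜ), T.Adj ⟨a, ha⟩ ⟨b, hb⟩) ∨
    (∃ ha : a ∈ S, (f ⟨a, ha⟩ : V) = b) ∨ (∃ hb : b ∈ S, (f ⟨b, hb⟩ : V) = a)
  symm := ⟨by
    rintro a b (⟨ha, hb, h⟩ | h | h)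
    · exact Or.inl ⟨hb, ha, h.symm⟩
    · exact Or.inr (Or.inr h)
    · exact Or.inr (Or.inl h)⟩
  loopless := ⟨by
    rintro a (⟨ha, hb, h⟩ | ⟨ha, h⟩ | ⟨ha, h⟩)
    · exact h.ne rfl
    · exact (f ⟨a, ha⟩).2 (h.symm ▸ ha)
    · exact (f ⟨a, ha⟩).2 (h.symm ▸ ha)⟩

section attach

variable {V : Type*} {S : Set V} {f : S → (Sᶜ : Set V)} {T : SimpleGraph (Sᶜ : Set V)}

lemma attach_adj_coe (a b : (Sᶜ : Set V)) : (attach S f T).Adj a b ↔ T.Adj a b := by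
  constructor
  · rintro (⟨_, _, h⟩ | ⟨ha, _⟩ | ⟨hb, _⟩)
    · exact h
    · exact (a.2 ha).elim
    · exact (b.2 hb).elim
  · intro h
    exact Or.inl ⟨a.2, b.2, h⟩

lemma attach_adj_of_mem (s : S) (b : V) : (attach S f T).Adj s b ↔ b = f s := by
  constructor
  · rintro (⟨ha, _, _⟩ | ⟨_, h⟩ | ⟨hb, h⟩)
    · exact (ha s.2).elim
    · exact h.symm
    · exact ((f ⟨b, hb⟩).2 (h ▸ s.2)).elim
  · rintro rfl
    exact Or.inr (Or.inl ⟨s.2, rfl⟩)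

lemma attach_isLeaf (s : S) : IsLeaf (attach S f T) s :=
  ⟨f s, (attach_adj_of_mem s _).2 rfl, fun y hy => (attach_adj_of_mem s y).1 hy⟩

open Classical in
/-- The retraction of `V` onto the complement of `S` that sends each `s ∈ S` to `f s`. -/
noncomputable def retract (S : Set V) (f : S → (Sᶜ : Set V)) (v : V) : (Sᶜ : Set V) :=
  if h : v ∈ S then f ⟨v, h⟩ else ⟨v, h⟩

lemma retract_mem (s : S) : retract S f s = f s := by simp [retract]

lemma retract_coe (a : (Sᶜ : Set V)) : retract S f a = a := by
  have : (a : V) ∉ S := a.2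
  simp [retract, this]

/-- If every edge of `G` is either contracted by the retraction or mapped to an edge of `H`, then
walks of `G` can be pushed to `H`. -/
lemma reachable_retract {G : SimpleGraph V} {H : SimpleGraph (Sᶜ : Set V)}
    (h : ∀ a b, G.Adj a b → retract S f a = retract S f b ∨
      H.Adj (retract S f a) (retract S f b)) {a b : V} (hab : G.Reachable a b) :
    H.Reachable (retract S f a) (retract S f b) := by
  obtain ⟨p⟩ := hab
  induction p with
  | nil => exact SimpleGraph.Reachable.refl _
  | cons hadj _ ih =>
    rcases h _ _ hadj with h | h
    · rw [h]; exact ih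
    · exact h.reachable.trans ih

/-- An edge of the attached graph is pendant at a vertex of `S`, or an edge of `T`. -/
lemma attach_adj_cases {a b : V} (h : (attach S f T).Adj a b) :
    (∃ s : S, a = s ∧ b = f s) ∨ (∃ s : S, b = s ∧ a = f s) ∨
      ∃ x y : (Sᶜ : Set V), a = x ∧ b = y ∧ T.Adj x y := by
  rcases h with ⟨ha, hb, h⟩ | ⟨ha, h⟩ | ⟨hb, h⟩
  · exact Or.inr (Or.inr ⟨_, _, rfl, rfl, h⟩)
  · exact Or.inl ⟨⟨a, ha⟩, rfl, h.symm⟩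
  · exact Or.inr (Or.inl ⟨⟨b, hb⟩, rfl, h.symm⟩)

lemma attach_connected (hT : T.Connected) : (attach S f T).Connected := by
  let φ : T →g attach S f T := ⟨Subtype.val, fun {a b} h => (attach_adj_coe a b).2 h⟩
  have key : ∀ v : V, (attach S f T).Reachable v (retract S f v) := by
    intro v
    by_cases hv : v ∈ S
    · have : (attach S f T).Adj v (retract S f v) := by
        rw [retract_mem ⟨v, hv⟩]
        exact (attach_adj_of_mem ⟨v, hv⟩ _).2 rfl
      exact this.reachable
    · rw [retract_coe ⟨v, hv⟩]
  have := hT.nonempty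
  have hV : Nonempty V := this.map Subtype.val
  refine SimpleGraph.Connected.mk fun a b => ?_
  exact (key a).trans (((hT.preconnected (retract S f a) (retract S f b)).map φ).trans (key b).symm)

/-- Deleting a pendant edge isolates its leaf, and a detour around an edge of `T` would retract to
a detour inside `T`; hence every edge of the attached graph is a bridge. -/
lemma attach_isAcyclic (hT : T.IsAcyclic) : (attach S f T).IsAcyclic := by
  have pendant : ∀ s : S,
      ¬ ((attach S f T).deleteEdges {s((s : V), (f s : V))}).Reachable s (f s) := by
    intro s
    have hne : (s : V) ≠ f s := fun h => (f s).2 (h ▸ s.2)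
    refine SimpleGraph.not_reachable_of_neighborSet_left_eq_empty hne ?_
    ext w
    simp +contextual [attach_adj_of_mem]
  rw [SimpleGraph.isAcyclic_iff_forall_adj_isBridge] at hT ⊢
  intro a b hab
  rw [SimpleGraph.isBridge_iff]
  rcases attach_adj_cases hab with ⟨s, rfl, rfl⟩ | ⟨s, rfl, rfl⟩ | ⟨x, y, rfl, rfl, hxy⟩
  · exact pendant s
  · rw [Sym2.eq_swap]
    exact fun h => pendant s h.symm
  · intro h
    have hb := hT hxy
    rw [SimpleGraph.isBridge_iff] at hb
    apply hb
    have := reachable_retract (f := f) (H := T.deleteEdges {s(x, y)}) ?_ h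
    · rwa [retract_coe, retract_coe] at this
    · intro a b h'
      rw [SimpleGraph.deleteEdges_adj] at h'
      rcases attach_adj_cases h'.1 with ⟨s, rfl, rfl⟩ | ⟨s, rfl, rfl⟩ | ⟨u, v, rfl, rfl, huv⟩
      · left; rw [retract_mem, retract_coe]
      · left; rw [retract_mem, retract_coe]
      · right
        rw [retract_coe, retract_coe, SimpleGraph.deleteEdges_adj]
        refine ⟨huv, fun hc => h'.2 ?_⟩
        simp only [Set.mem_singleton_iff] at hc ⊢
        exact congrArg (Sym2.map Subtype.val) hc

end attach

/-! ### Removing leaves and counting trees with prescribed leaves -/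

/-- Detaching: a tree whose vertices in `S` are pairwise non-adjacent leaves arises by attaching
the vertices of `S` to its restriction to the complement of `S`, which is again a tree if nonempty. -/
lemma exists_attach {V : Type*} {S : Set V} {G : SimpleGraph V} (hG : G.IsTree)
    (hne : (Sᶜ).Nonempty)
    (hleaf : ∀ s ∈ S, IsLeaf G s) (hind : ∀ s ∈ S, ∀ t ∈ S, ¬ G.Adj s t) :
    ∃ f : S → (Sᶜ : Set V), (G.induce Sᶜ).IsTree ∧ attach S f (G.induce Sᶜ) = G := by
  choose g hg using fun s : S => hleaf s s.2
  simp only at hg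
  let f : S → (Sᶜ : Set V) := fun s => ⟨g s, fun hs => hind s s.2 _ hs (hg s).1⟩
  have hf : ∀ (s : S) b, G.Adj s b ↔ b = f s := fun s b =>
    ⟨fun h => (hg s).2 b h, fun h => h ▸ (hg s).1⟩
  have heq : attach S f (G.induce Sᶜ) = G := by
    ext a b
    by_cases ha : a ∈ S
    · rw [attach_adj_of_mem ⟨a, ha⟩, hf ⟨a, ha⟩]
    by_cases hb : b ∈ S
    · rw [SimpleGraph.adj_comm, attach_adj_of_mem ⟨b, hb⟩, G.adj_comm, hf ⟨b, hb⟩]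
    · rw [attach_adj_coe ⟨a, ha⟩ ⟨b, hb⟩]; rfl
  refine ⟨f, ⟨?_, hG.isAcyclic.induce _⟩, heq⟩
  have : Nonempty (Sᶜ : Set V) := hne.to_subtype
  refine SimpleGraph.Connected.mk fun a b => ?_
  have := reachable_retract (f := f) (H := G.induce Sᶜ) ?_ (hG.connected.preconnected a b)
  · rwa [retract_coe, retract_coe] at this
  · intro a b h'
    rw [← heq] at h'
    rcases attach_adj_cases h' with ⟨s, rfl, rfl⟩ | ⟨s, rfl, rfl⟩ | ⟨u, v, rfl, rfl, huv⟩
    · left; rw [retract_mem, retract_coe]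
    · left; rw [retract_mem, retract_coe]
    · right
      rwa [retract_coe, retract_coe]

/-- The number of labeled trees on `m` vertices. -/
noncomputable def treeCount (m : ℕ) : ℕ := Nat.card {T : SimpleGraph (Fin m) // T.IsTree}

lemma card_trees (V : Type*) [Finite V] :
    Nat.card {T : SimpleGraph V // T.IsTree} = treeCount (Nat.card V) := by
  have e := Finite.equivFin V
  refine Nat.card_congr (Equiv.subtypeEquiv e.simpleGraph fun T => ?_)
  exact (SimpleGraph.Iso.isTree_iff (SimpleGraph.Iso.comap e.symm T)).symm

/-- Attaching pendant vertices is a bijection from the pairs of a map `S → Sᶜ` and a tree on `Sᶜ` to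
the trees on `V` in which all vertices of `S` are leaves. The hypothesis that leaves in `S` are
never adjacent excludes the case where `S` is all of a two-element `V`. -/
lemma card_trees_leaves {V : Type*} [Finite V] (S : Set V)
    (hind : ∀ G : SimpleGraph V, G.IsTree → (∀ s ∈ S, IsLeaf G s) →
      ∀ s ∈ S, ∀ t ∈ S, ¬ G.Adj s t) :
    Nat.card {G : SimpleGraph V // G.IsTree ∧ ∀ s ∈ S, IsLeaf G s} =
      (Nat.card V - S.ncard) ^ S.ncard * treeCount (Nat.card V - S.ncard) := by
  have hc : Nat.card (Sᶜ : Set V) = Nat.card V - S.ncard := by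
    rw [Nat.card_coe_set_eq, Set.ncard_compl]
  rw [← hc, ← card_trees, ← Nat.card_coe_set_eq S, ← Nat.card_fun, ← Nat.card_prod]
  symm
  refine Nat.card_eq_of_bijective
    (fun p : (S → (Sᶜ : Set V)) × {T : SimpleGraph (Sᶜ : Set V) // T.IsTree} =>
      ⟨attach S p.1 p.2.1, ⟨attach_connected p.2.2.connected, attach_isAcyclic p.2.2.isAcyclic⟩,
        fun s hs => attach_isLeaf ⟨s, hs⟩⟩) ⟨?_, ?_⟩
  · rintro ⟨f, T, hT⟩ ⟨f', T', hT'⟩ h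
    have h : attach S f T = attach S f' T' := congrArg Subtype.val h
    refine Prod.ext (funext fun s => Subtype.ext ?_) (Subtype.ext ?_)
    · exact (attach_adj_of_mem (T := T') s _).1 (h ▸ (attach_adj_of_mem (T := T) s _).2 rfl)
    · ext a b
      rw [← attach_adj_coe (f := f), h, attach_adj_coe]
  · rintro ⟨G, hG, hl⟩
    have hne : (Sᶜ).Nonempty := by
      obtain ⟨v⟩ := hG.connected.nonempty
      by_cases hv : v ∈ S
      · obtain ⟨w, hw, -⟩ := hl v hv
        exact ⟨w, fun hwS => hind G hG hl v hv w hwS hw⟩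
      · exact ⟨v, hv⟩
    obtain ⟨f, hT, h⟩ := exists_attach hG hne hl (hind G hG hl)
    exact ⟨(f, ⟨_, hT⟩), Subtype.ext h⟩

/-! ### Inclusion–exclusion and Cayley's formula -/

/-- Two adjacent leaves would form a whole connected component, hence the whole graph. -/
lemma leaves_not_adj {V : Type*} [Finite V] (hV : 3 ≤ Nat.card V) {G : SimpleGraph V}
    (hG : G.Connected) {s t : V} (hs : IsLeaf G s) (ht : IsLeaf G t) : ¬ G.Adj s t := by
  intro hst
  have key : ∀ a b, G.Reachable a b → (a = s ∨ a = t) → (b = s ∨ b = t) := by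
    rintro a b ⟨p⟩
    induction p with
    | nil => exact id
    | cons hadj _ ih =>
      rintro (rfl | rfl)
      · exact ih (Or.inr (hs.unique hadj hst))
      · exact ih (Or.inl (ht.unique hadj hst.symm))
  have : (Set.univ : Set V) ⊆ {s, t} := fun v _ => key s v (hG.preconnected s v) (Or.inl rfl)
  have h1 := Set.ncard_le_ncard this (Set.toFinite _)
  have h2 := Set.ncard_insert_le s {t}
  rw [Set.ncard_singleton] at h2
  rw [Set.ncard_univ] at h1
  omega

lemma exists_isLeaf {V : Type*} [Finite V] [Nontrivial V] {G : SimpleGraph V} (hG : G.IsTree) :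
    ∃ v, IsLeaf G v := by
  classical
  have := Fintype.ofFinite V
  obtain ⟨v, hv⟩ := hG.exists_vert_degree_one_of_nontrivial
  refine ⟨v, (isLeaf_iff_card G v).1 ?_⟩
  rw [Nat.card_eq_fintype_card, SimpleGraph.card_neighborSet_eq_degree, hv]

/-- Inclusion–exclusion over the set of leaves, which is never empty. -/
lemma treeCount_alternating (n : ℕ) (hn : 3 ≤ n) :
    ∑ k ∈ Finset.range (n + 1),
      (-1 : ℤ) ^ k * (n.choose k) * (((n - k) ^ k * treeCount (n - k) : ℕ) : ℤ) = 0 := by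
  classical
  have : Nontrivial (Fin n) := Fin.nontrivial_iff_two_le.2 (by omega)
  let leaves : SimpleGraph (Fin n) → Finset (Fin n) := fun T => {v | IsLeaf T v}
  have h1 : ∑ T : {T : SimpleGraph (Fin n) // T.IsTree},
      ∑ S ∈ (leaves T.1).powerset, (-1 : ℤ) ^ S.card = 0 := by
    refine Finset.sum_eq_zero fun T _ => Finset.sum_powerset_neg_one_pow_card_of_nonempty ?_
    obtain ⟨v, hv⟩ := exists_isLeaf T.2
    exact ⟨v, by simp [leaves, hv]⟩
  have h2 : ∀ S : Finset (Fin n),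
      (Finset.univ.filter fun T : {T : SimpleGraph (Fin n) // T.IsTree} => S ⊆ leaves T.1).card =
        (n - S.card) ^ S.card * treeCount (n - S.card) := by
    intro S
    have h := card_trees_leaves (S : Set (Fin n)) fun G hG hl s hs t ht =>
      leaves_not_adj (by simpa using hn) hG.connected (hl s hs) (hl t ht)
    rw [Set.ncard_coe_finset, Nat.card_fin] at h
    rw [← h, ← Fintype.card_subtype, ← Nat.card_eq_fintype_card]
    refine Nat.card_congr ((Equiv.subtypeSubtypeEquivSubtypeInter _
      (fun G : SimpleGraph (Fin n) => S ⊆ leaves G)).trans (Equiv.subtypeEquivRight fun G => ?_))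
    simp [leaves, Finset.subset_iff]
  have h3 : ∑ S ∈ (Finset.univ : Finset (Fin n)).powerset,
      (-1 : ℤ) ^ S.card * (((n - S.card) ^ S.card * treeCount (n - S.card) : ℕ) : ℤ) = 0 := by
    rw [← h1, Finset.sum_comm' (t' := (Finset.univ : Finset (Fin n)).powerset)
      (s' := fun S => Finset.univ.filter fun T => S ⊆ leaves T.1) (by simp)]
    refine Finset.sum_congr rfl fun S _ => ?_
    rw [Finset.sum_const, h2, nsmul_eq_mul, mul_comm]
  rw [Finset.sum_powerset_apply_card (fun k =>
    (-1 : ℤ) ^ k * (((n - k) ^ k * treeCount (n - k) : ℕ) : ℤ)), Finset.card_fin] at h3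
  rw [← h3]
  refine Finset.sum_congr rfl fun k _ => ?_
  rw [nsmul_eq_mul]; ring

/-- The `n`-th finite difference of `x ^ (n - 2)` vanishes. -/
lemma alternating_pow (n : ℕ) (hn : 3 ≤ n) :
    ∑ k ∈ Finset.range (n + 1),
      (-1 : ℤ) ^ k * (n.choose k) * (((n - k) ^ (n - 2) : ℕ) : ℤ) = 0 := by
  have h := congrFun (fwdDiff_iter_pow_eq_zero_of_lt (R := ℤ) (j := n - 2) (n := n) (by omega)) 0
  rw [fwdDiff_iter_eq_sum_shift, ← Finset.sum_range_reflect] at h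
  rw [Pi.zero_apply] at h
  rw [← h]
  refine Finset.sum_congr rfl fun k hk => ?_
  have hk : k ≤ n := by simpa [Nat.lt_succ_iff] using hk
  have e1 : n + 1 - 1 - k = n - k := by omega
  have e2 : n - (n - k) = k := by omega
  rw [e1, e2, Nat.choose_symm hk]
  simp

lemma treeCount_one : treeCount 1 = 1 := by
  rw [treeCount, Nat.card_eq_one_iff_unique]
  refine ⟨⟨fun a b => Subtype.ext (Subsingleton.elim _ _)⟩, ⟨⊥, .of_subsingleton⟩⟩

lemma card_trees_leaf (n : ℕ) (v : Fin n) :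
    Nat.card {G : SimpleGraph (Fin n) // G.IsTree ∧ IsLeaf G v} = (n - 1) * treeCount (n - 1) := by
  have h := card_trees_leaves ({v} : Set (Fin n)) (by
    rintro G - - s rfl t rfl
    exact G.irrefl)
  simpa using h

lemma treeCount_two : treeCount 2 = 1 := by
  have h := card_trees_leaf 2 0
  rw [show (2 - 1) * treeCount (2 - 1) = 1 by simp [treeCount_one]] at h
  rw [← h, treeCount]
  refine Nat.card_congr (Equiv.subtypeEquivRight fun G => ⟨fun hG => ⟨hG, ?_⟩, fun hG => hG.1⟩)
  have hadj : G.Adj 0 1 := by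
    obtain ⟨w, hw⟩ := hG.connected.preconnected.exists_adj_of_nontrivial 0
    have hw1 : w = 1 := by
      have := hw.ne
      omega
    exact hw1 ▸ hw
  refine ⟨1, hadj, fun y hy => ?_⟩
  have := hy.ne
  omega

/-- Cayley's formula. The truncated exponent is harmless at `n = 1`, where the base is `1`. -/
lemma treeCount_eq (n : ℕ) (hn : 1 ≤ n) : treeCount n = n ^ (n - 2) := by
  induction n using Nat.strong_induction_on with
  | _ n ih =>
  rcases (by omega : n = 1 ∨ n = 2 ∨ 3 ≤ n) with rfl | rfl | h3
  · simp [treeCount_one]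
  · simp [treeCount_two]
  have h := (treeCount_alternating n h3).trans (alternating_pow n h3).symm
  rw [Finset.sum_range_succ', Finset.sum_range_succ'] at h
  -- All terms but the one of the empty set of leaves agree.
  have hrest : ∀ k ∈ Finset.range n, (n - (k + 1)) ^ (k + 1) * treeCount (n - (k + 1)) =
      (n - (k + 1)) ^ (n - 2) := by
    intro k hk
    have hk := Finset.mem_range.1 hk
    rcases (by omega : n - (k + 1) = 0 ∨ n - (k + 1) = 1 ∨ 2 ≤ n - (k + 1)) with h | h | h
    · rw [h, zero_pow (by omega), zero_pow (by omega), zero_mul]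
    · rw [h, treeCount_one]; simp
    · rw [ih _ (by omega) (by omega), ← pow_add]
      congr 1
      omega
  rw [Finset.sum_congr rfl fun k hk => by rw [hrest k hk]] at h
  have h := add_left_cancel h
  simp at h
  exact_mod_cast h

/-! ### Counting leaves -/

lemma leafCount_eq {n : ℕ} (T : SimpleGraph (Fin n)) :
    leafCount T = Nat.card {v : Fin n // IsLeaf T v} :=
  Nat.card_congr (Equiv.subtypeEquivRight fun v => isLeaf_iff_card T v)

/-- Double counting of the pairs of a tree and one of its leaves. -/
lemma sum_leafCount (n : ℕ) (hn : 2 ≤ n) :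
    (∑ᶠ T : {T : SimpleGraph (Fin n) // T.IsTree}, leafCount T.val) =
        n * (n - 1) ^ (n - 2) := by
  classical
  rw [finsum_eq_sum_of_fintype]
  have h1 : ∀ v : Fin n, (Finset.univ.filter
      fun T : {T : SimpleGraph (Fin n) // T.IsTree} => IsLeaf T.1 v).card =
        (n - 1) ^ (n - 2) := by
    intro v
    rw [← Fintype.card_subtype, ← Nat.card_eq_fintype_card]
    rw [Nat.card_congr (Equiv.subtypeSubtypeEquivSubtypeInter _
      (fun G : SimpleGraph (Fin n) => IsLeaf G v)), card_trees_leaf, treeCount_eq _ (by omega)]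
    rcases (by omega : n = 2 ∨ 3 ≤ n) with rfl | h3
    · simp
    · rw [← pow_succ']
      congr 1
      omega
  have h2 : ∀ T : {T : SimpleGraph (Fin n) // T.IsTree},
      leafCount T.1 = (Finset.univ.filter fun v => IsLeaf T.1 v).card := fun T => by
    rw [leafCount_eq, Nat.card_eq_fintype_card, Fintype.card_subtype]
  simp_rw [h2]
  refine (Finset.sum_card_bipartiteAbove_eq_sum_card_bipartiteBelow
    (s := (Finset.univ : Finset {T : SimpleGraph (Fin n) // T.IsTree}))
    (t := (Finset.univ : Finset (Fin n))) (fun T v => IsLeaf T.1 v)).trans ?_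
  refine (Finset.sum_congr rfl fun v _ => h1 v).trans ?_
  simp

/-- The sum over all labeled trees on `[n]` of the number of leaves equals
`n·(n−1)^{n−2}`; consequently the expected number of leaves of a uniformly random
labeled tree on `[n]` is `n·(1 − 1/n)^{n−2}`. -/
theorem sum_leaf_count (n : ℕ) (hn : 2 ≤ n) :
    (∑ᶠ T : {T : SimpleGraph (Fin n) // T.IsTree}, leafCount T.val) =
        n * (n - 1) ^ (n - 2) ∧
    ((n : ℝ) ^ (n - 2))⁻¹ *
        ∑ᶠ T : {T : SimpleGraph (Fin n) // T.IsTree}, (leafCount T.val : ℝ) =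
      (n : ℝ) * (1 - 1 / (n : ℝ)) ^ (n - 2) := by
  have h := sum_leafCount n hn
  refine ⟨h, ?_⟩
  have hn0 : (n : ℝ) ≠ 0 := by
    have : n ≠ 0 := by omega
    exact_mod_cast this
  have hc : ∑ᶠ T : {T : SimpleGraph (Fin n) // T.IsTree}, (leafCount T.val : ℝ) =
      (n : ℝ) * ((n : ℝ) - 1) ^ (n - 2) := by
    classical
    rw [finsum_eq_sum_of_fintype] at h ⊢
    rw [← Nat.cast_sum, h]
    push_cast [Nat.cast_sub (show 1 ≤ n by omega)]
    rfl
  have h1 : 1 - 1 / (n : ℝ) = ((n : ℝ) - 1) / n := by field_simp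
  rw [hc, h1, div_pow]
  field_simp
end
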